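/- p-entropy hypocoercivity for the linear relaxation Boltzmann equation: for each p ∈ (1,2] there exist positive constants Λ, α, β, γ (depending on λ, p, d) such that for every smooth h : [0,∞) × 𝕋^d × ℝ^d → ℝ that is bounded above and below by positive constants, has all partial derivatives bounded, satisfies ∫ h(t,·) dμ = 1 for all t, and solves ∂_t h + v·∇_x h = λ(Πh − h), one has for all t ≥ 0: I^{(p)}(h_t) + β H_Π^{(p)}(h_t) ≤ exp(−Λt) (α I^{(p)}(h_0) + β H_Π^{(p)}(h_0)), and consequently H^{(p)}(h_t) ≤ γ exp(−Λt) I^{(p)}(h_0). -/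

import Mathlib

/-!
Why the theorem holds. Write `a = ∇_x h`, `b = ∇_v h`, `g = Πa = ∇_x Πh`, `W = h^{p-2}` and
`Q = (Πh)^{p-2}`. The decaying functional is
`E = ∫ W (16/λ |a|² + 2 a·b + λ/4 |b|²) dμ + 2λ H_Π^{(p)}(h)`,
whose first term is comparable to `I^{(p)}` (`KinFlow.modF_bounds`).

Free transport preserves `μ`, so the time derivative of an integral against `μ` is the integral of
the derivative `L = ∂_t + v·∇_x` of the integrand (`hasDerivAt_integral`). Along `L` one has
`L h = λ(Πh - h)`, `L a = λ(g - a)` and `L b = -a - λ b` (`flow_of_regular`); the commutator term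
`-a` makes the cross term `2 a·b` produce `-2 W |a|²`. The relaxation operator contributes the term
`λ W g·b`, which is not small. It is here that the projected entropy enters: Gaussian integration
by parts gives `d/dt H_Π^{(p)} = ∫ Q g·b dμ` (`KinFlow.entropy_deriv`), and the combination
`(W + Q) g - m W a`, with `m = p + (2-p) Πh/h`, is controlled by the dissipation
`m W |a|² - 2 (W + Q) a·g + M Q |g|²`, with `M = p + (2-p) h/Πh`. This is a discriminant condition,
`(W + Q)² ≤ W Q m M` (`weight_ineq`), and it is where `1 < p ≤ 2` is needed. That dissipation is
available because `∫ Q (2 a·g - M |g|²) dμ = 0`, both parts being `2 ∫ Q |g|² dμ` after averaging in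
velocity. Hence `E' ≤ -∫ W (|a|² + λ²/16 |b|²) dμ` (`pointwise_ineq`, `KinFlow.lyap_deriv`).

To close the estimate, `H_Π^{(p)} ≤ H^{(p)}` by Jensen, and `H^{(p)} ≤ C I^{(p)}` by the Poincaré
inequality for `μ` applied to `h^{p/2}` (`nu_poincare`, `KinFlow.beckner`). Thus `E' ≤ -Λ E`, and
Grönwall's argument gives the first bound; the second one follows from the first and from
`H^{(p)} ≤ C I^{(p)}` used at time `t` and at time `0`. The Poincaré inequality itself is proved by
joining two independent points by a measure-preserving path: a segment on the torus, a rotation for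
the Gaussian.
-/

open MeasureTheory Real Filter

noncomputable section

/-- The standard Gaussian density `ℳ(v) = (2π)^{-d/2} exp(-|v|²/2)` on `ℝ^d`. -/
def gauss (d : ℕ) (v : Fin d → ℝ) : ℝ :=
  (2 * Real.pi) ^ (-(d : ℝ) / 2) * Real.exp (-(∑ i, v i ^ 2) / 2)

/-- Fundamental domain `[0,1]^d` of the torus `𝕋^d`; the normalized Lebesgue measure on
the torus is the restriction of Lebesgue measure to this cube. -/
def cube (d : ℕ) : Set (Fin d → ℝ) := Set.Icc 0 1

/-- A function of `(x,v)` represents a function on `𝕋^d × ℝ^d` iff it is `ℤ^d`-periodic in `x`. -/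
def IsPeriodic (d : ℕ) (f : (Fin d → ℝ) → (Fin d → ℝ) → ℝ) : Prop :=
  ∀ (x v : Fin d → ℝ) (k : Fin d → ℤ), f (x + fun i => (k i : ℝ)) v = f x v

/-- The projection `Πf(x) = ∫ f(x,u) ℳ(u) du`. -/
def proj (d : ℕ) (f : (Fin d → ℝ) → (Fin d → ℝ) → ℝ) (x : Fin d → ℝ) : ℝ :=
  ∫ u, f x u * gauss d u

/-- Euclidean dot product on `ℝ^d`. -/
def dotp (d : ℕ) (a b : Fin d → ℝ) : ℝ := ∑ i, a i * b i

/-- Squared Euclidean norm on `ℝ^d`. -/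
def nsq (d : ℕ) (a : Fin d → ℝ) : ℝ := ∑ i, a i ^ 2

/-- Gradient in the `x` variable. -/
def gradx (d : ℕ) (f : (Fin d → ℝ) → (Fin d → ℝ) → ℝ) (x v : Fin d → ℝ) : Fin d → ℝ :=
  fun i => fderiv ℝ (fun y => f y v) x (Pi.single i 1)

/-- Gradient in the `v` variable. -/
def gradv (d : ℕ) (f : (Fin d → ℝ) → (Fin d → ℝ) → ℝ) (x v : Fin d → ℝ) : Fin d → ℝ :=
  fun i => fderiv ℝ (fun w => f x w) v (Pi.single i 1)

/-- Gradient of a function of `x` only. -/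
def grad1 (d : ℕ) (g : (Fin d → ℝ) → ℝ) (x : Fin d → ℝ) : Fin d → ℝ :=
  fun i => fderiv ℝ g x (Pi.single i 1)

/-- Laplacian in the `v` variable. -/
def lapv (d : ℕ) (f : (Fin d → ℝ) → (Fin d → ℝ) → ℝ) (x v : Fin d → ℝ) : ℝ :=
  ∑ i, fderiv ℝ (fun w => gradv d f x w i) v (Pi.single i 1)

/-- Integral against `μ = ℳ(v) dv dx` on `𝕋^d × ℝ^d`. -/
def intMu (d : ℕ) (F : (Fin d → ℝ) → (Fin d → ℝ) → ℝ) : ℝ :=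
  ∫ x in cube d, ∫ v, F x v * gauss d v

/-- `I^X(h) = ∫ |∇_x h|²/h dμ`. -/
def IX (d : ℕ) (h : (Fin d → ℝ) → (Fin d → ℝ) → ℝ) : ℝ :=
  intMu d fun x v => nsq d (gradx d h x v) / h x v

/-- `I^V(h) = ∫ |∇_v h|²/h dμ`. -/
def IV (d : ℕ) (h : (Fin d → ℝ) → (Fin d → ℝ) → ℝ) : ℝ :=
  intMu d fun x v => nsq d (gradv d h x v) / h x v

/-- `I^M(h) = ∫ (∇_x h · ∇_v h)/h dμ`. -/
def IM (d : ℕ) (h : (Fin d → ℝ) → (Fin d → ℝ) → ℝ) : ℝ :=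
  intMu d fun x v => dotp d (gradx d h x v) (gradv d h x v) / h x v

/-- The full Fisher information `I(h) = ∫ |∇_{x,v} h|²/h dμ`. -/
def Ifull (d : ℕ) (h : (Fin d → ℝ) → (Fin d → ℝ) → ℝ) : ℝ :=
  intMu d fun x v => (nsq d (gradx d h x v) + nsq d (gradv d h x v)) / h x v

/-- `I^{ΠX}(h) = ∫_{𝕋^d} |∇_x Πh|²/Πh dx`. -/
def IPiX (d : ℕ) (h : (Fin d → ℝ) → (Fin d → ℝ) → ℝ) : ℝ :=
  ∫ x in cube d, nsq d (grad1 d (proj d h) x) / proj d h x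

/-- `I^{ΠX/X}(h) = ∫ (|∇_x(Πh/h)|²/(Πh/h)) h dμ`. -/
def IPiXX (d : ℕ) (h : (Fin d → ℝ) → (Fin d → ℝ) → ℝ) : ℝ :=
  intMu d fun x v =>
    nsq d (gradx d (fun y w => proj d h y / h y w) x v) / (proj d h x / h x v) * h x v

/-- `I^{ΠV/V}(h) = ∫ (|∇_v h|²/h)(Πh/h) dμ`. -/
def IPiVV (d : ℕ) (h : (Fin d → ℝ) → (Fin d → ℝ) → ℝ) : ℝ :=
  intMu d fun x v => nsq d (gradv d h x v) / h x v * (proj d h x / h x v)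

/-- The relative entropy `H(h) = ∫ h log h dμ`. -/
def Hent (d : ℕ) (h : (Fin d → ℝ) → (Fin d → ℝ) → ℝ) : ℝ :=
  intMu d fun x v => h x v * Real.log (h x v)

/-- The projected entropy `H_Π(h) = ∫_{𝕋^d} Πh log Πh dx`. -/
def HPi (d : ℕ) (h : (Fin d → ℝ) → (Fin d → ℝ) → ℝ) : ℝ :=
  ∫ x in cube d, proj d h x * Real.log (proj d h x)

/-- The local average speed `U(x) = ∫ v h(x,v) ℳ(v) dv`. -/
def Uvec (d : ℕ) (h : (Fin d → ℝ) → (Fin d → ℝ) → ℝ) (x : Fin d → ℝ) : Fin d → ℝ :=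
  fun i => ∫ v, v i * h x v * gauss d v

/-- The divergence `∇_x · U`. -/
def divU (d : ℕ) (h : (Fin d → ℝ) → (Fin d → ℝ) → ℝ) (x : Fin d → ℝ) : ℝ :=
  ∑ i, fderiv ℝ (fun y => Uvec d h y i) x (Pi.single i 1)

/-- The `p`-entropy `H^{(p)}(h) = ∫ (h^p - h)/(p(p-1)) dμ`. -/
def Hp (d : ℕ) (p : ℝ) (h : (Fin d → ℝ) → (Fin d → ℝ) → ℝ) : ℝ :=
  intMu d fun x v => (h x v ^ p - h x v) / (p * (p - 1))

/-- The projected `p`-entropy `H_Π^{(p)}(h) = ∫_{𝕋^d} ((Πh)^p - Πh)/(p(p-1)) dx`. -/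
def HpPi (d : ℕ) (p : ℝ) (h : (Fin d → ℝ) → (Fin d → ℝ) → ℝ) : ℝ :=
  ∫ x in cube d, ((proj d h x) ^ p - proj d h x) / (p * (p - 1))

/-- The `p`-Fisher information `I^{(p)}(h) = ∫ h^{p-2} |∇_{x,v} h|² dμ`. -/
def Ipfull (d : ℕ) (p : ℝ) (h : (Fin d → ℝ) → (Fin d → ℝ) → ℝ) : ℝ :=
  intMu d fun x v => h x v ^ (p - 2) * (nsq d (gradx d h x v) + nsq d (gradv d h x v))

/-- The spatial `p`-Fisher information `∫ h^{p-2} |∇_x h|² dμ`. -/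
def IpX (d : ℕ) (p : ℝ) (h : (Fin d → ℝ) → (Fin d → ℝ) → ℝ) : ℝ :=
  intMu d fun x v => h x v ^ (p - 2) * nsq d (gradx d h x v)

/-- Regularity of a time-dependent `h`: smooth, periodic in `x`, bounded above and below by
positive constants, with all partial derivatives bounded. -/
def Regular (d : ℕ) (h : ℝ → (Fin d → ℝ) → (Fin d → ℝ) → ℝ) : Prop :=
  ContDiff ℝ (⊤ : ℕ∞) (fun q : ℝ × (Fin d → ℝ) × (Fin d → ℝ) => h q.1 q.2.1 q.2.2) ∧
  (∀ t, IsPeriodic d (h t)) ∧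
  (∃ c C : ℝ, 0 < c ∧ ∀ t x v, c ≤ h t x v ∧ h t x v ≤ C) ∧
  (∀ n : ℕ, ∃ C : ℝ, ∀ q : ℝ × (Fin d → ℝ) × (Fin d → ℝ),
    ‖iteratedFDeriv ℝ n (fun r : ℝ × (Fin d → ℝ) × (Fin d → ℝ) => h r.1 r.2.1 r.2.2) q‖ ≤ C)

/-- Regularity of a time-independent `h`: smooth, periodic in `x`, bounded above and below by
positive constants, with bounded gradient. -/
def RegularStatic (d : ℕ) (h : (Fin d → ℝ) → (Fin d → ℝ) → ℝ) : Prop :=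
  ContDiff ℝ (⊤ : ℕ∞) (fun q : (Fin d → ℝ) × (Fin d → ℝ) => h q.1 q.2) ∧
  IsPeriodic d h ∧
  (∃ c C : ℝ, 0 < c ∧ ∀ x v, c ≤ h x v ∧ h x v ≤ C) ∧
  (∃ C : ℝ, ∀ q : (Fin d → ℝ) × (Fin d → ℝ),
    ‖fderiv ℝ (fun r : (Fin d → ℝ) × (Fin d → ℝ) => h r.1 r.2) q‖ ≤ C)

/-- `h` solves the linear relaxation Boltzmann equation `∂_t h + v·∇_x h = λ(Πh - h)` for `t ≥ 0`. -/
def SolvesLRB (d : ℕ) (lam : ℝ) (h : ℝ → (Fin d → ℝ) → (Fin d → ℝ) → ℝ) : Prop :=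
  ∀ t x v, 0 ≤ t →
    deriv (fun s => h s x v) t + dotp d v (gradx d (h t) x v)
      = lam * (proj d (h t) x - h t x v)

/-- `h` solves the free transport equation `∂_t h + v·∇_x h = 0` for `t ≥ 0`. -/
def SolvesTransport (d : ℕ) (h : ℝ → (Fin d → ℝ) → (Fin d → ℝ) → ℝ) : Prop :=
  ∀ t x v, 0 ≤ t →
    deriv (fun s => h s x v) t + dotp d v (gradx d (h t) x v) = 0

/-- `h` solves the pure relaxation equation `∂_t h = λ(Πh - h)` for `t ≥ 0`. -/
def SolvesCollision (d : ℕ) (lam : ℝ) (h : ℝ → (Fin d → ℝ) → (Fin d → ℝ) → ℝ) : Prop :=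
  ∀ t x v, 0 ≤ t →
    deriv (fun s => h s x v) t = lam * (proj d (h t) x - h t x v)

/-- `h` solves the kinetic Fokker–Planck equation `∂_t h + v·∇_x h = Δ_v h - v·∇_v h` for `t ≥ 0`. -/
def SolvesKFP (d : ℕ) (h : ℝ → (Fin d → ℝ) → (Fin d → ℝ) → ℝ) : Prop :=
  ∀ t x v, 0 ≤ t →
    deriv (fun s => h s x v) t + dotp d v (gradx d (h t) x v)
      = lapv d (h t) x v - dotp d v (gradv d (h t) x v)

section
open ProbabilityTheory Topology
open scoped Pointwise

/-! ### The Gaussian measure and the unit cube -/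

/-- The standard Gaussian measure `ℳ(v) dv` on `ℝ^d`. -/
def gm (d : ℕ) : Measure (Fin d → ℝ) :=
  volume.withDensity (fun v => ENNReal.ofReal (gauss d v))

lemma gauss_pos (d : ℕ) (v : Fin d → ℝ) : 0 < gauss d v := by
  unfold gauss; positivity

lemma gauss_continuous (d : ℕ) : Continuous (gauss d) := by
  unfold gauss; fun_prop

lemma gauss_eq_prod (d : ℕ) (v : Fin d → ℝ) :
    gauss d v = ∏ i, gaussianPDFReal 0 1 (v i) := by
  unfold gauss gaussianPDFReal
  rw [Finset.prod_mul_distrib, ← Real.exp_sum]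
  congr 1
  · simp only [Finset.prod_const, Finset.card_univ, Fintype.card_fin, NNReal.coe_one, mul_one]
    rw [Real.sqrt_eq_rpow, ← Real.rpow_neg (by positivity), ← Real.rpow_natCast,
      ← Real.rpow_mul (by positivity)]
    congr 1; ring
  · congr 1
    simp [neg_div, Finset.sum_div]

/-- The measure `gm d` is the product of `d` one-dimensional standard Gaussians. -/
lemma gm_eq_pi (d : ℕ) : gm d = Measure.pi (fun _ => gaussianReal 0 1) := by
  symm
  refine Measure.pi_eq fun s hs => ?_
  have hintg : Integrable (fun v : Fin d → ℝ => ∏ i, gaussianPDFReal 0 1 (v i))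
      (volume.restrict (Set.univ.pi s)) := by
    refine Integrable.restrict ?_
    exact Integrable.fintype_prod (μ := fun _ => volume)
      (f := fun _ => gaussianPDFReal 0 1) (fun _ => integrable_gaussianPDFReal 0 1)
  rw [gm, withDensity_apply _ (MeasurableSet.univ_pi hs)]
  simp_rw [gauss_eq_prod]
  rw [← ofReal_integral_eq_lintegral_ofReal hintg
    (ae_of_all _ fun v => Finset.prod_nonneg fun i _ => gaussianPDFReal_nonneg 0 1 _)]
  rw [volume_pi, Measure.restrict_pi_pi, integral_fintype_prod_eq_prod
    (fun _ => gaussianPDFReal 0 1), ENNReal.ofReal_prod_of_nonneg]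
  · refine Finset.prod_congr rfl fun i _ => ?_
    rw [gaussianReal_apply_eq_integral 0 one_ne_zero]
  · exact fun i _ => integral_nonneg fun x => gaussianPDFReal_nonneg 0 1 x

instance gm_prob (d : ℕ) : IsProbabilityMeasure (gm d) := by
  rw [gm_eq_pi]; infer_instance

instance gm_gaussian (d : ℕ) : IsGaussian (gm d) := by
  have h1 := map_pi_eq_stdGaussian (ι := Fin d)
  have h2 : gm d = (stdGaussian (EuclideanSpace ℝ (Fin d))).map
      (EuclideanSpace.equiv (Fin d) ℝ : EuclideanSpace ℝ (Fin d) →L[ℝ] (Fin d → ℝ)) := by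
    rw [← h1, Measure.map_map (by fun_prop) (by fun_prop), gm_eq_pi]
    symm
    exact Measure.map_id
  rw [h2]; infer_instance

lemma integrable_norm_sq_gm (d : ℕ) : Integrable (fun v => ‖v‖ ^ 2) (gm d) := by
  have h := IsGaussian.memLp_id (gm d) 2 (by simp)
  simpa using h.integrable_norm_pow (by norm_num)

lemma integrable_norm_gm (d : ℕ) : Integrable (fun v => ‖v‖) (gm d) := by
  have h := IsGaussian.memLp_id (gm d) 1 (by simp)
  simpa using (h.integrable le_rfl).norm

lemma integral_gm (d : ℕ) (f : (Fin d → ℝ) → ℝ) :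
    ∫ v, f v ∂(gm d) = ∫ v, f v * gauss d v := by
  unfold gm
  rw [integral_withDensity_eq_integral_toReal_smul₀]
  · refine integral_congr_ae (ae_of_all _ fun v => ?_)
    simp [ENNReal.toReal_ofReal (gauss_pos d v).le, mul_comm]
  · exact ((gauss_continuous d).measurable.ennreal_ofReal).aemeasurable
  · simp

lemma integrable_gm (d : ℕ) (f : (Fin d → ℝ) → ℝ) :
    Integrable f (gm d) ↔ Integrable (fun v => f v * gauss d v) := by
  unfold gm
  rw [integrable_withDensity_iff_integrable_smul₀']
  · refine integrable_congr (ae_of_all _ fun v => ?_)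
    simp [ENNReal.toReal_ofReal (gauss_pos d v).le, mul_comm]
  · exact ((gauss_continuous d).measurable.ennreal_ofReal).aemeasurable
  · simp

lemma hasFDerivAt_gauss (d : ℕ) (v : Fin d → ℝ) (i : Fin d) :
    DifferentiableAt ℝ (gauss d) v ∧ fderiv ℝ (gauss d) v (Pi.single i 1) = - (v i * gauss d v) := by
  have hd : DifferentiableAt ℝ (gauss d) v := by unfold gauss; fun_prop
  refine ⟨hd, ?_⟩
  have h1 : HasDerivAt (fun s : ℝ => gauss d (v + s • Pi.single i 1))
      (fderiv ℝ (gauss d) v (Pi.single i 1)) 0 := hd.hasFDerivAt.hasLineDerivAt _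
  have h2 : HasDerivAt (fun s : ℝ => gauss d (v + s • Pi.single i 1)) (- (v i * gauss d v)) 0 := by
    have h3 : ∀ j ∈ Finset.univ, HasDerivAt
        (fun s : ℝ => ((v + s • (Pi.single i 1 : Fin d → ℝ)) j) ^ 2)
        (2 * v j * (Pi.single i 1 : Fin d → ℝ) j) 0 := by
      intro j _
      have := (((hasDerivAt_id (0:ℝ)).mul_const ((Pi.single i 1 : Fin d → ℝ) j)).const_add
        (v j)).fun_pow 2
      simpa using this
    have h4 := (((HasDerivAt.fun_sum h3).neg.div_const 2).exp).const_mul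
      ((2 * Real.pi) ^ (-(d : ℝ) / 2))
    unfold gauss
    refine h4.congr_deriv ?_
    simp [Pi.single_apply, neg_div]
    ring
  exact h1.unique h2

/-- Gaussian integration by parts `∫ vᵢ f ℳ = ∫ ∂ᵢ f ℳ`. -/
lemma gauss_ibp (d : ℕ) (f : (Fin d → ℝ) → ℝ) (i : Fin d) (hf : ContDiff ℝ 1 f) (C : ℝ)
    (hC : ∀ v, |f v| ≤ C) (hC' : ∀ v, ‖fderiv ℝ f v‖ ≤ C) :
    ∫ v, v i * f v ∂(gm d) = ∫ v, fderiv ℝ f v (Pi.single i 1) ∂(gm d) := by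
  have hfc := hf.continuous
  have hfc' := hf.continuous_fderiv (by norm_num)
  have i1 : Integrable f (gm d) := by
    refine Integrable.mono' (integrable_const C) hfc.aestronglyMeasurable (ae_of_all _ hC)
  have i2 : Integrable (fun v => fderiv ℝ f v (Pi.single i 1)) (gm d) := by
    refine Integrable.mono' (integrable_const (C * ‖(Pi.single i 1 : Fin d → ℝ)‖))
      (by fun_prop) (ae_of_all _ fun v => ?_)
    exact ((fderiv ℝ f v).le_opNorm _).trans (by gcongr; exact hC' v)
  have i3 : Integrable (fun v => v i * f v) (gm d) := by
    refine Integrable.mono' ((integrable_norm_gm d).const_mul C) (by fun_prop)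
      (ae_of_all _ fun v => ?_)
    rw [norm_mul, mul_comm]
    exact mul_le_mul (hC v) (norm_le_pi_norm v i) (norm_nonneg _) ((abs_nonneg _).trans (hC v))
  rw [integral_gm, integral_gm]
  rw [integrable_gm] at i1 i2 i3
  have key := integral_mul_fderiv_eq_neg_fderiv_mul_of_integrable (μ := volume) (f := f)
    (g := gauss d) (v := Pi.single i 1) i2 (by
      refine i3.neg.congr (ae_of_all _ fun v => ?_)
      simp only [(hasFDerivAt_gauss d v i).2, Pi.neg_apply]; ring) i1
    (fun x _ => (hf.differentiable (by norm_num)) x) (fun x _ => (hasFDerivAt_gauss d x i).1)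
  have e : ∀ v, f v * fderiv ℝ (gauss d) v (Pi.single i 1) = - (v i * f v * gauss d v) := by
    intro v; rw [(hasFDerivAt_gauss d v i).2]; ring
  simp_rw [e] at key
  rw [integral_neg] at key
  linarith

lemma integral_coord_gm (d : ℕ) (i : Fin d) : ∫ v, v i ∂(gm d) = 0 := by
  have := gauss_ibp d (fun _ => 1) i contDiff_const 1 (by simp) (by simp)
  simpa using this

/-- Rotations preserve `gm d ⊗ gm d`. -/
lemma gm_rotation (d : ℕ) (θ : ℝ) :
    MeasurePreserving (ContinuousLinearMap.rotation θ : (Fin d → ℝ) × (Fin d → ℝ) →L[ℝ] _)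
      ((gm d).prod (gm d)) ((gm d).prod (gm d)) := by
  refine ⟨by fun_prop, IsGaussian.map_rotation_eq_self ?_ θ⟩
  ext i
  have := (ContinuousLinearMap.proj (R := ℝ) (φ := fun _ : Fin d => ℝ) i).integral_comp_comm
    (μ := gm d) (φ := id) (IsGaussian.integrable_id)
  simp only [id_eq, ContinuousLinearMap.proj_apply] at this ⊢
  rw [← this, integral_coord_gm]; rfl

/-- Integrals of `ℤ^d`-periodic functions over the unit cube are translation invariant. -/
lemma cube_translate (d : ℕ) (g : (Fin d → ℝ) → ℝ)
    (hg : ∀ x (k : Fin d → ℤ), g (x + fun i => (k i : ℝ)) = g x) (a : Fin d → ℝ) :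
    ∫ x in cube d, g (x + a) = ∫ x in cube d, g x := by
  have hdom := ZSpan.isAddFundamentalDomain (Pi.basisFun ℝ (Fin d)) volume
  rw [ZSpan.fundamentalDomain_pi_basisFun] at hdom
  have hae : (Set.univ.pi fun _ : Fin d => Set.Ico (0:ℝ) 1) =ᵐ[volume] cube d := by
    have := Measure.univ_pi_Ico_ae_eq_Icc (μ := fun _ : Fin d => (volume : Measure ℝ))
      (f := fun _ => 0) (g := fun _ => 1)
    exact this
  have hinv : ∀ (k : Submodule.span ℤ (Set.range (Pi.basisFun ℝ (Fin d)))) (x : Fin d → ℝ),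
      g (k +ᵥ x) = g x := by
    rintro ⟨k, hk⟩ x
    have : ∃ c : Fin d → ℤ, k = fun i => (c i : ℝ) := by
      rw [(Pi.basisFun ℝ (Fin d)).mem_span_iff_repr_mem ℤ] at hk
      choose c hc using hk
      exact ⟨c, funext fun i => by simpa using (hc i).symm⟩
    obtain ⟨c, rfl⟩ := this
    have := hg x c
    rw [add_comm] at this
    exact this
  have : VAddInvariantMeasure (Submodule.span ℤ (Set.range (Pi.basisFun ℝ (Fin d))))
      (Fin d → ℝ) volume := ⟨fun c s _ => measure_preimage_add volume (c : Fin d → ℝ) s⟩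
  have h2 := hdom.vadd_of_comm a
  have h3 := h2.setIntegral_eq hdom hinv
  rw [setIntegral_congr_set hae] at h3
  rw [← h3, ← setIntegral_congr_set hae]
  have := (measurePreserving_add_right volume a).setIntegral_image_emb
    (measurableEmbedding_addRight a) g (Set.univ.pi fun _ : Fin d => Set.Ico (0:ℝ) 1)
  rw [← this]
  have hset : (fun x => x + a) '' (Set.univ.pi fun _ : Fin d => Set.Ico (0:ℝ) 1)
      = a +ᵥ (Set.univ.pi fun _ : Fin d => Set.Ico (0:ℝ) 1) := by
    rw [← Set.image_vadd]
    exact Set.image_congr fun x _ => add_comm x a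
  rw [hset]

instance cube_prob (d : ℕ) : IsProbabilityMeasure (volume.restrict (cube d)) := by
  constructor
  simp [cube, Real.volume_Icc_pi]

/-! ### Poincaré inequalities on the torus and for the Gaussian -/

lemma sq_integral_le (k : ℝ → ℝ) (hk : Continuous k) :
    (∫ s in (0:ℝ)..1, k s) ^ 2 ≤ ∫ s in (0:ℝ)..1, k s ^ 2 := by
  set m := ∫ s in (0:ℝ)..1, k s with hm
  have h0 : 0 ≤ ∫ s in (0:ℝ)..1, (k s - m) ^ 2 :=
    intervalIntegral.integral_nonneg zero_le_one fun s _ => sq_nonneg _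
  have h1 : ∀ s, (k s - m) ^ 2 = k s ^ 2 - (2 * m * k s - m ^ 2) := fun s => by ring
  simp_rw [h1] at h0
  rw [intervalIntegral.integral_sub ((by fun_prop : Continuous fun s => k s ^ 2).intervalIntegrable _ _)
    ((by fun_prop : Continuous fun s => 2 * m * k s - m ^ 2).intervalIntegrable _ _),
    intervalIntegral.integral_sub ((by fun_prop : Continuous fun s => 2 * m * k s).intervalIntegrable _ _)
    ((by fun_prop : Continuous fun s : ℝ => m ^ 2).intervalIntegrable _ _),
    intervalIntegral.integral_const_mul, ← hm] at h0
  simp at h0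
  nlinarith

/-- If `s ↦ u s ω` has derivative `u' s ω` and `∫ (u' s)² dρ ≤ M` for all `s`, then the increment
of `u` over `[0,1]` has second moment at most `M`. -/
lemma path_ineq {d : ℕ} (ρ : Measure ((Fin d → ℝ) × (Fin d → ℝ))) [IsProbabilityMeasure ρ]
    (u u' : ℝ → (Fin d → ℝ) × (Fin d → ℝ) → ℝ)
    (hu : ∀ s ω, HasDerivAt (fun s => u s ω) (u' s ω) s)
    (hc : Continuous fun q : ℝ × ((Fin d → ℝ) × (Fin d → ℝ)) => u' q.1 q.2)
    (g : (Fin d → ℝ) × (Fin d → ℝ) → ℝ) (hg : Integrable g ρ)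
    (hb : ∀ᵐ ω ∂ρ, ∀ s, u' s ω ^ 2 ≤ g ω) (M : ℝ)
    (hM : ∀ s, ∫ ω, u' s ω ^ 2 ∂ρ ≤ M) :
    ∫ ω, (u 1 ω - u 0 ω) ^ 2 ∂ρ ≤ M := by
  have hcs : ∀ ω, Continuous fun s => u' s ω := fun ω =>
    hc.comp (continuous_id.prodMk continuous_const)
  have hftc : ∀ ω, u 1 ω - u 0 ω = ∫ s in (0:ℝ)..1, u' s ω := fun ω =>
    (intervalIntegral.integral_eq_sub_of_hasDerivAt (fun s _ => hu s ω)
      ((hcs ω).intervalIntegrable _ _)).symm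
  have hintg : Integrable (Function.uncurry fun (s : ℝ) ω => u' s ω ^ 2)
      ((volume.restrict (Set.Ioc (0:ℝ) 1)).prod ρ) := by
    refine Integrable.mono' (hg.comp_snd _) (hc.pow 2).aestronglyMeasurable ?_
    have h2 : ∀ᵐ z ∂((volume.restrict (Set.Ioc (0:ℝ) 1)).prod ρ), ∀ s, u' s z.2 ^ 2 ≤ g z.2 :=
      Measure.quasiMeasurePreserving_snd.ae hb
    filter_upwards [h2] with z hz
    rw [Real.norm_of_nonneg (by exact sq_nonneg _)]
    exact hz z.1
  have hintg2 : Integrable (fun ω => ∫ s in (0:ℝ)..1, u' s ω ^ 2) ρ := by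
    simp_rw [intervalIntegral.integral_of_le zero_le_one]
    exact hintg.integral_prod_right
  calc ∫ ω, (u 1 ω - u 0 ω) ^ 2 ∂ρ ≤ ∫ ω, (∫ s in (0:ℝ)..1, u' s ω ^ 2) ∂ρ := by
        refine integral_mono_of_nonneg (ae_of_all _ fun ω => sq_nonneg _) hintg2
          (ae_of_all _ fun ω => ?_)
        simp only [hftc]
        exact sq_integral_le _ (hcs ω)
    _ = ∫ s in (0:ℝ)..1, ∫ ω, u' s ω ^ 2 ∂ρ := by
        simp_rw [intervalIntegral.integral_of_le zero_le_one]
        exact (integral_integral_swap hintg).symm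
    _ ≤ ∫ s in (0:ℝ)..1, M := by
        refine intervalIntegral.integral_mono_on zero_le_one ?_ (by simp) fun s _ => hM s
        rw [intervalIntegrable_iff_integrableOn_Ioc_of_le zero_le_one]
        exact hintg.integral_prod_left
    _ = M := by simp

lemma fderiv_apply_eq_sum {d : ℕ} (f : (Fin d → ℝ) → ℝ) (y z : Fin d → ℝ) :
    fderiv ℝ f y z = ∑ i, z i * grad1 d f y i := by
  conv_lhs => rw [pi_eq_sum_univ' z]
  simp only [map_sum, map_smul, smul_eq_mul, grad1]

lemma fderiv_sq_le {d : ℕ} (f : (Fin d → ℝ) → ℝ) (y z : Fin d → ℝ) :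
    (fderiv ℝ f y z) ^ 2 ≤ nsq d z * nsq d (grad1 d f y) := by
  rw [fderiv_apply_eq_sum]
  exact Finset.sum_mul_sq_le_sq_mul_sq _ _ _

lemma nsq_nonneg' {d : ℕ} (a : Fin d → ℝ) : 0 ≤ nsq d a :=
  Finset.sum_nonneg fun _ _ => sq_nonneg _

lemma nsq_le_norm {d : ℕ} (a : Fin d → ℝ) : nsq d a ≤ d * ‖a‖ ^ 2 := by
  have : nsq d a ≤ ∑ _i : Fin d, ‖a‖ ^ 2 := Finset.sum_le_sum fun i _ => by
    rw [← sq_abs]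
    exact pow_le_pow_left₀ (abs_nonneg _) (norm_le_pi_norm a i) 2
  simpa using this

lemma norm_le_one_of_cube {d : ℕ} {z : Fin d → ℝ} (hz : z ∈ cube d) : ‖z‖ ≤ 1 := by
  refine (pi_norm_le_iff_of_nonneg zero_le_one).2 fun i => ?_
  have h1 := hz.1 i
  have h2 := hz.2 i
  simp at h1 h2
  rw [Real.norm_eq_abs, abs_le]; constructor <;> linarith

lemma ae_cube_norm (d : ℕ) : ∀ᵐ z ∂(volume.restrict (cube d)), ‖z‖ ≤ 1 :=
  (ae_restrict_mem measurableSet_Icc).mono fun _ hz => norm_le_one_of_cube hz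

lemma grad1_cont {d : ℕ} {g : (Fin d → ℝ) → ℝ} (hg : ContDiff ℝ 1 g) :
    Continuous fun x => nsq d (grad1 d g x) := by
  have := hg.continuous_fderiv (by norm_num)
  unfold nsq grad1
  fun_prop

lemma nsq_grad1_le {d : ℕ} {g : (Fin d → ℝ) → ℝ} {C : ℝ} (hC : ∀ v, ‖fderiv ℝ g v‖ ≤ C)
    (x : Fin d → ℝ) : nsq d (grad1 d g x) ≤ d * C ^ 2 := by
  have : nsq d (grad1 d g x) ≤ ∑ _i : Fin d, C ^ 2 := Finset.sum_le_sum fun i _ => by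
    rw [← sq_abs]
    refine pow_le_pow_left₀ (abs_nonneg _) ?_ 2
    refine ((fderiv ℝ g x).le_opNorm _).trans ?_
    simpa [Pi.norm_single] using hC x
  simpa using this

lemma integrable_nsq_grad1 {d : ℕ} {g : (Fin d → ℝ) → ℝ} (hg : ContDiff ℝ 1 g) {C : ℝ}
    (hC : ∀ v, ‖fderiv ℝ g v‖ ≤ C) (ρ : Measure (Fin d → ℝ)) [IsFiniteMeasure ρ] :
    Integrable (fun x => nsq d (grad1 d g x)) ρ := by
  refine Integrable.mono' (integrable_const (d * C ^ 2)) (grad1_cont hg).aestronglyMeasurable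
    (ae_of_all _ fun x => ?_)
  rw [Real.norm_of_nonneg (nsq_nonneg' _)]
  exact nsq_grad1_le hC x

/-- Poincaré inequality on the torus, in two-point form: join `x` to `x + z` by a segment and use translation
invariance. -/
lemma torus_poincare (d : ℕ) (g : (Fin d → ℝ) → ℝ) (hg : ContDiff ℝ 1 g)
    (hper : ∀ x (k : Fin d → ℤ), g (x + fun i => (k i : ℝ)) = g x) (C : ℝ)
    (hC : ∀ v, ‖fderiv ℝ g v‖ ≤ C) :
    ∫ x in cube d, ∫ y in cube d, (g x - g y) ^ 2 ≤ d * ∫ x in cube d, nsq d (grad1 d g x) := by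
  have hd := hg.differentiable (by norm_num)
  have hfc := hg.continuous_fderiv (by norm_num)
  have hgc := hg.continuous
  have hperg : ∀ x (k : Fin d → ℤ), nsq d (grad1 d g (x + fun i => (k i : ℝ)))
      = nsq d (grad1 d g x) := by
    intro x k
    have : (fun y => g (y + fun i => (k i : ℝ))) = g := funext fun y => hper y k
    unfold grad1
    rw [← fderiv_comp_add_right, this]
  have hC0 : 0 ≤ C := (norm_nonneg _).trans (hC 0)
  have main := path_ineq ((volume.restrict (cube d)).prod (volume.restrict (cube d)))
    (fun s q => g (q.1 + s • q.2)) (fun s q => fderiv ℝ g (q.1 + s • q.2) q.2)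
    (fun s q => by
      have h1 : HasDerivAt (fun s : ℝ => q.1 + s • q.2) q.2 s := by
        simpa using ((hasDerivAt_id s).smul_const q.2).const_add q.1
      exact (hd _).hasFDerivAt.comp_hasDerivAt s h1)
    (by fun_prop) (fun _ => C ^ 2) (integrable_const _)
    (by
      have h2 : ∀ᵐ q ∂((volume.restrict (cube d)).prod (volume.restrict (cube d))), ‖q.2‖ ≤ 1 :=
        Measure.quasiMeasurePreserving_snd.ae (ae_cube_norm d)
      filter_upwards [h2] with q hq s
      rw [← sq_abs]
      refine pow_le_pow_left₀ (abs_nonneg _) ?_ 2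
      refine ((fderiv ℝ g _).le_opNorm _).trans ?_
      calc _ ≤ C * 1 := mul_le_mul (hC _) hq (norm_nonneg _) hC0
        _ = C := mul_one C)
    (d * ∫ x in cube d, nsq d (grad1 d g x))
    (fun s => by
      have hi : Integrable (fun q : (Fin d → ℝ) × (Fin d → ℝ) =>
          (d : ℝ) * nsq d (grad1 d g (q.1 + s • q.2)))
          ((volume.restrict (cube d)).prod (volume.restrict (cube d))) := by
        refine Integrable.mono' (integrable_const (d * (d * C ^ 2))) ?_ (ae_of_all _ fun x => ?_)
        · have := grad1_cont hg
          exact (continuous_const.mul (this.comp (by fun_prop))).aestronglyMeasurable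
        · rw [Real.norm_of_nonneg (mul_nonneg (Nat.cast_nonneg _) (nsq_nonneg' _))]
          gcongr
          exact nsq_grad1_le hC _
      calc _ ≤ ∫ q, (d : ℝ) * nsq d (grad1 d g (q.1 + s • q.2))
              ∂((volume.restrict (cube d)).prod (volume.restrict (cube d))) := by
            refine integral_mono_of_nonneg (ae_of_all _ fun ω => sq_nonneg _) hi ?_
            have h2 : ∀ᵐ q ∂((volume.restrict (cube d)).prod (volume.restrict (cube d))),
              ‖q.2‖ ≤ 1 := Measure.quasiMeasurePreserving_snd.ae (ae_cube_norm d)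
            filter_upwards [h2] with q hq
            refine (fderiv_sq_le g _ _).trans ?_
            refine mul_le_mul_of_nonneg_right ((nsq_le_norm _).trans ?_) (nsq_nonneg' _)
            have : ‖q.2‖ ^ 2 ≤ 1 := pow_le_one₀ (norm_nonneg _) hq
            exact mul_le_of_le_one_right (Nat.cast_nonneg _) this
        _ = _ := by
            rw [integral_prod_symm _ hi]
            simp_rw [integral_const_mul]
            congr 1
            calc _ = ∫ _z in cube d, ∫ x in cube d, nsq d (grad1 d g x) := by
                  refine integral_congr_ae (ae_of_all _ fun z => ?_)
                  exact cube_translate d (fun x => nsq d (grad1 d g x)) hperg (s • z)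
              _ = _ := by simp)
  refine le_trans (le_of_eq ?_) main
  have hbd : ∃ B, ∀ x, |g x| ≤ B := by
    obtain ⟨B, hB⟩ := (isCompact_Icc (a := (0 : Fin d → ℝ)) (b := 1)).exists_bound_of_continuousOn
      hgc.continuousOn
    refine ⟨B, fun x => ?_⟩
    have := hper x (fun i => - ⌊x i⌋)
    rw [← this]
    refine hB _ ⟨fun i => ?_, fun i => ?_⟩
    · simpa using Int.floor_le (x i)
    · have := Int.fract_lt_one (x i)
      have h3 := Int.self_sub_floor (x i)
      simp only [Pi.add_apply, Int.cast_neg, Pi.one_apply]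
      linarith
  obtain ⟨B, hB⟩ := hbd
  rw [integral_prod]
  · refine integral_congr_ae (ae_of_all _ fun x => ?_)
    have := cube_translate d (fun y => (g y - g x) ^ 2) (fun y k => by simp only [hper]) x
    simp only [one_smul, zero_smul, add_zero]
    simp_rw [add_comm x]
    rw [this]
    refine integral_congr_ae (ae_of_all _ fun y => ?_)
    simp only; ring
  · refine Integrable.mono' (integrable_const ((2 * B) ^ 2))
      (by fun_prop) (ae_of_all _ fun x => ?_)
    rw [norm_pow]
    refine pow_le_pow_left₀ (abs_nonneg _) ?_ 2
    have h1 := abs_le.1 (hB (x.1 + (1:ℝ) • x.2))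
    have h2 := abs_le.1 (hB (x.1 + (0:ℝ) • x.2))
    rw [Real.norm_eq_abs, abs_le]; constructor <;> linarith

/-- Poincaré inequality for the Gaussian, with constant `π²/4 · ∫ |w|² dγ(w)`: join two independent
copies `v, w` by the arc `v cos θ + w sin θ` and use rotation invariance. -/
lemma gauss_poincare (d : ℕ) (f : (Fin d → ℝ) → ℝ) (hf : ContDiff ℝ 1 f) (C : ℝ)
    (hB : ∀ v, |f v| ≤ C) (hC : ∀ v, ‖fderiv ℝ f v‖ ≤ C) :
    ∫ v, ∫ w, (f v - f w) ^ 2 ∂(gm d) ∂(gm d)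
      ≤ ((π / 2) ^ 2 * ∫ w, nsq d w ∂(gm d)) * ∫ v, nsq d (grad1 d f v) ∂(gm d) := by
  have hd := hf.differentiable (by norm_num)
  have hfc := hf.continuous_fderiv (by norm_num)
  have hgc := hf.continuous
  have hC0 : 0 ≤ C := (norm_nonneg _).trans (hC 0)
  have hn : Integrable (fun w => nsq d w) (gm d) := by
    refine Integrable.mono' ((integrable_norm_sq_gm d).const_mul d)
      (by unfold nsq; exact Continuous.aestronglyMeasurable (by fun_prop)) (ae_of_all _ fun x => ?_)
    rw [Real.norm_of_nonneg (nsq_nonneg' _)]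
    exact nsq_le_norm x
  have main := path_ineq ((gm d).prod (gm d))
    (fun s q => f (cos (π / 2 * s) • q.1 + sin (π / 2 * s) • q.2))
    (fun s q => π / 2 * fderiv ℝ f (cos (π / 2 * s) • q.1 + sin (π / 2 * s) • q.2)
      (- sin (π / 2 * s) • q.1 + cos (π / 2 * s) • q.2))
    (fun s q => by
      have h0 : HasDerivAt (fun s : ℝ => π / 2 * s) (π / 2) s := by
        simpa using (hasDerivAt_id s).const_mul (π / 2)
      have h1 : HasDerivAt (fun s : ℝ => cos (π / 2 * s) • q.1 + sin (π / 2 * s) • q.2)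
          ((π / 2) • (- sin (π / 2 * s) • q.1 + cos (π / 2 * s) • q.2)) s := by
        refine ((h0.cos.smul_const q.1).add (h0.sin.smul_const q.2)).congr_deriv ?_
        module
      refine ((hd _).hasFDerivAt.comp_hasDerivAt s h1).congr_deriv ?_
      rw [map_smul, smul_eq_mul])
    (by fun_prop)
    (fun q => (π / 2) ^ 2 * (C ^ 2 * (2 * (‖q.1‖ ^ 2 + ‖q.2‖ ^ 2))))
    ((((((integrable_norm_sq_gm d).comp_fst _).add
      ((integrable_norm_sq_gm d).comp_snd _)).const_mul 2).const_mul (C ^ 2)).const_mul _)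
    (ae_of_all _ fun q s => by
      rw [mul_pow]
      gcongr
      rw [← sq_abs]
      have h1 : |fderiv ℝ f (cos (π / 2 * s) • q.1 + sin (π / 2 * s) • q.2)
        (- sin (π / 2 * s) • q.1 + cos (π / 2 * s) • q.2)| ≤ C * (‖q.1‖ + ‖q.2‖) := by
        refine ((fderiv ℝ f _).le_opNorm _).trans ?_
        refine mul_le_mul (hC _) ((norm_add_le _ _).trans ?_) (norm_nonneg _) hC0
        refine add_le_add ?_ ?_
        · rw [norm_smul, norm_neg]
          exact mul_le_of_le_one_left (norm_nonneg _) (abs_sin_le_one _)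
        · rw [norm_smul]
          exact mul_le_of_le_one_left (norm_nonneg _) (abs_cos_le_one _)
      refine (pow_le_pow_left₀ (abs_nonneg _) h1 2).trans ?_
      rw [mul_pow]
      gcongr
      nlinarith [sq_nonneg (‖q.1‖ - ‖q.2‖)])
    (((π / 2) ^ 2 * ∫ w, nsq d w ∂(gm d)) * ∫ v, nsq d (grad1 d f v) ∂(gm d))
    (fun s => by
      have hFc : Continuous fun q : (Fin d → ℝ) × (Fin d → ℝ) =>
          (π / 2 * fderiv ℝ f q.1 q.2) ^ 2 := by fun_prop
      have hrot := integral_map (gm_rotation d (π / 2 * s)).aemeasurable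
        (f := fun q : (Fin d → ℝ) × (Fin d → ℝ) => (π / 2 * fderiv ℝ f q.1 q.2) ^ 2)
        hFc.aestronglyMeasurable
      rw [(gm_rotation d (π / 2 * s)).map_eq] at hrot
      refine (le_of_eq hrot.symm).trans ?_
      have hi := ((integrable_nsq_grad1 hf hC (gm d)).mul_prod hn).const_mul ((π / 2) ^ 2)
      calc _ ≤ ∫ q, (π / 2) ^ 2 * (nsq d (grad1 d f q.1) * nsq d q.2) ∂((gm d).prod (gm d)) := by
            refine integral_mono_of_nonneg (ae_of_all _ fun ω => sq_nonneg _) hi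
              (ae_of_all _ fun q => ?_)
            simp only [mul_pow]
            gcongr
            rw [mul_comm]
            exact fderiv_sq_le f _ _
        _ = _ := by
            rw [integral_const_mul, integral_prod_mul (fun v => nsq d (grad1 d f v))
              (fun w => nsq d w)]
            ring)
  refine le_trans (le_of_eq ?_) main
  simp only [mul_one, mul_zero, cos_pi_div_two, sin_pi_div_two, cos_zero, sin_zero, zero_smul,
    one_smul, zero_add, add_zero]
  rw [integral_prod]
  · refine integral_congr_ae (ae_of_all _ fun x => ?_)
    refine integral_congr_ae (ae_of_all _ fun y => ?_)
    simp only; ring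
  · refine Integrable.mono' (integrable_const ((2 * C) ^ 2))
      (by fun_prop) (ae_of_all _ fun x => ?_)
    rw [norm_pow]
    refine pow_le_pow_left₀ (abs_nonneg _) ?_ 2
    have h1 := abs_le.1 (hB x.1)
    have h2 := abs_le.1 (hB x.2)
    rw [Real.norm_eq_abs, abs_le]; constructor <;> linarith

/-! ### The measure `μ` and its Poincaré inequality -/

/-- The measure `μ = ℳ(v) dv dx` on `𝕋^d × ℝ^d`, the torus being represented by the unit cube. -/
def nu (d : ℕ) : Measure ((Fin d → ℝ) × (Fin d → ℝ)) := (volume.restrict (cube d)).prod (gm d)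

instance nu_prob (d : ℕ) : IsProbabilityMeasure (nu d) := by unfold nu; infer_instance

lemma intMu_eq {d : ℕ} {F : (Fin d → ℝ) → (Fin d → ℝ) → ℝ}
    (hF : Integrable (fun q : (Fin d → ℝ) × (Fin d → ℝ) => F q.1 q.2) (nu d)) :
    intMu d F = ∫ q, F q.1 q.2 ∂(nu d) := by
  unfold nu at *
  rw [integral_prod _ hF]
  simp_rw [integral_gm]
  rfl

lemma integrable_bdd {α : Type*} [TopologicalSpace α] [SecondCountableTopology α]
    [MeasurableSpace α] [OpensMeasurableSpace α]
    {ρ : Measure α} [IsFiniteMeasure ρ] {f : α → ℝ} (hf : Continuous f) {C : ℝ}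
    (hC : ∀ x, |f x| ≤ C) : Integrable f ρ :=
  Integrable.mono' (integrable_const C) hf.aestronglyMeasurable (ae_of_all _ hC)

lemma sub_sq_bdd {a b C : ℝ} (ha : |a| ≤ C) (hb : |b| ≤ C) : |(a - b) ^ 2| ≤ (2 * C) ^ 2 := by
  rw [abs_pow]
  refine pow_le_pow_left₀ (abs_nonneg _) ?_ 2
  have h1 := abs_le.1 ha
  have h2 := abs_le.1 hb
  rw [abs_le]; constructor <;> linarith

/-- The constant in the Poincaré inequality for `μ`. -/
def poinc (d : ℕ) : ℝ := d + (π / 2) ^ 2 * ∫ w, nsq d w ∂(gm d)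

lemma gauss_const_nonneg (d : ℕ) : 0 ≤ (π / 2) ^ 2 * ∫ w, nsq d w ∂(gm d) :=
  mul_nonneg (by positivity) (integral_nonneg fun _ => nsq_nonneg' _)

/-- Poincaré inequality for `μ`, obtained by changing the velocity and the position one after the
other in the two-point form of the variance. -/
lemma nu_poincare (d : ℕ) (f : (Fin d → ℝ) × (Fin d → ℝ) → ℝ) (hf : ContDiff ℝ 1 f)
    (hper : ∀ x v (k : Fin d → ℤ), f (x + fun i => (k i : ℝ), v) = f (x, v)) (C : ℝ)
    (hB : ∀ q, |f q| ≤ C) (hC : ∀ q, ‖fderiv ℝ f q‖ ≤ C) :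
    ∫ q, f q ^ 2 ∂(nu d) - (∫ q, f q ∂(nu d)) ^ 2
      ≤ poinc d * ∫ q, (nsq d (gradx d (fun x v => f (x, v)) q.1 q.2)
          + nsq d (gradv d (fun x v => f (x, v)) q.1 q.2)) ∂(nu d) := by
  have hfc := hf.continuous
  have hd := hf.differentiable (by norm_num)
  have hfd := hf.continuous_fderiv (by norm_num)
  have hx : ∀ v, ContDiff ℝ 1 fun x => f (x, v) := fun v => hf.comp (by fun_prop)
  have hv : ∀ x, ContDiff ℝ 1 fun v => f (x, v) := fun x => hf.comp (by fun_prop)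
  have ex : ∀ x v, fderiv ℝ (fun y => f (y, v)) x
      = (fderiv ℝ f (x, v)).comp (ContinuousLinearMap.inl ℝ _ _) := fun x v =>
    ((hd (x, v)).hasFDerivAt.comp x (hasFDerivAt_prodMk_left x v)).fderiv
  have ev : ∀ x v, fderiv ℝ (fun y => f (x, y)) v
      = (fderiv ℝ f (x, v)).comp (ContinuousLinearMap.inr ℝ _ _) := fun x v =>
    ((hd (x, v)).hasFDerivAt.comp v (hasFDerivAt_prodMk_right x v)).fderiv
  have hC0 : 0 ≤ C := (norm_nonneg _).trans (hC 0)
  have bx : ∀ v x, ‖fderiv ℝ (fun y => f (y, v)) x‖ ≤ C := fun v x => by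
    rw [ex]
    refine (ContinuousLinearMap.opNorm_comp_le _ _).trans ?_
    exact (mul_le_mul (hC _) (ContinuousLinearMap.norm_inl_le_one ℝ _ _) (norm_nonneg _) hC0).trans
      (by simp)
  have bv : ∀ x v, ‖fderiv ℝ (fun y => f (x, y)) v‖ ≤ C := fun x v => by
    rw [ev]
    refine (ContinuousLinearMap.opNorm_comp_le _ _).trans ?_
    exact (mul_le_mul (hC _) (ContinuousLinearMap.norm_inr_le_one ℝ _ _) (norm_nonneg _) hC0).trans
      (by simp)
  have igx : Integrable (fun q : (Fin d → ℝ) × (Fin d → ℝ) =>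
      nsq d (gradx d (fun x v => f (x, v)) q.1 q.2)) (nu d) := by
    refine integrable_bdd (C := d * C ^ 2) ?_ fun q => ?_
    · unfold nsq gradx; simp_rw [ex]; fun_prop
    · rw [abs_of_nonneg (nsq_nonneg' _)]; exact nsq_grad1_le (bx q.2) q.1
  have igv : Integrable (fun q : (Fin d → ℝ) × (Fin d → ℝ) =>
      nsq d (gradv d (fun x v => f (x, v)) q.1 q.2)) (nu d) := by
    refine integrable_bdd (C := d * C ^ 2) ?_ fun q => ?_
    · unfold nsq gradv; simp_rw [ev]; fun_prop
    · rw [abs_of_nonneg (nsq_nonneg' _)]; exact nsq_grad1_le (bv q.1) q.2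
  have if1 : Integrable f (nu d) := integrable_bdd hfc hB
  have if2 : Integrable (fun q => f q ^ 2) (nu d) :=
    integrable_bdd (C := C ^ 2) (by fun_prop) fun q => by
      rw [abs_pow]; exact pow_le_pow_left₀ (abs_nonneg _) (hB q) 2
  have hvar : ∫ q, ∫ r, (f q - f r) ^ 2 ∂(nu d) ∂(nu d)
      = 2 * (∫ q, f q ^ 2 ∂(nu d) - (∫ q, f q ∂(nu d)) ^ 2) := by
    set m := ∫ q, f q ∂(nu d) with hm
    set S := ∫ q, f q ^ 2 ∂(nu d) with hS
    have h1 : ∀ q, ∫ r, (f q - f r) ^ 2 ∂(nu d) = f q ^ 2 - 2 * m * f q + S := by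
      intro q
      have : ∀ r, (f q - f r) ^ 2 = f q ^ 2 - 2 * f q * f r + f r ^ 2 := fun r => by ring
      simp_rw [this]
      have hi : Integrable (fun r => f q ^ 2 - 2 * f q * f r) (nu d) :=
        (integrable_const _).sub (if1.const_mul _)
      rw [integral_add hi if2,
        integral_sub (integrable_const _) (if1.const_mul _), integral_const_mul, ← hm, ← hS]
      simp; ring
    simp_rw [h1]
    have hi : Integrable (fun q => f q ^ 2 - 2 * m * f q) (nu d) := if2.sub (if1.const_mul _)
    rw [integral_add hi (integrable_const _),
      integral_sub if2 (if1.const_mul _), integral_const_mul, ← hm, ← hS]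
    simp; ring
  have hV : ∫ q : (Fin d → ℝ) × (Fin d → ℝ), ∫ r : (Fin d → ℝ) × (Fin d → ℝ),
      (f (q.1, q.2) - f (q.1, r.2)) ^ 2 ∂(nu d) ∂(nu d)
      ≤ ((π / 2) ^ 2 * ∫ w, nsq d w ∂(gm d)) *
        ∫ q, nsq d (gradv d (fun x v => f (x, v)) q.1 q.2) ∂(nu d) := by
    have h1 : ∀ q : (Fin d → ℝ) × (Fin d → ℝ), ∫ r : (Fin d → ℝ) × (Fin d → ℝ),
        (f (q.1, q.2) - f (q.1, r.2)) ^ 2 ∂(nu d)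
        = ∫ w, (f (q.1, q.2) - f (q.1, w)) ^ 2 ∂(gm d) := fun q => by
      unfold nu
      rw [integral_fun_snd (fun w => (f (q.1, q.2) - f (q.1, w)) ^ 2)]
      simp
    simp_rw [h1]
    have i1 : Integrable (fun z : ((Fin d → ℝ) × (Fin d → ℝ)) × (Fin d → ℝ) =>
        (f (z.1.1, z.1.2) - f (z.1.1, z.2)) ^ 2) ((nu d).prod (gm d)) :=
      integrable_bdd (by fun_prop) fun z => sub_sq_bdd (hB _) (hB _)
    have i2 := i1.integral_prod_left
    unfold nu at i2 igv ⊢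
    rw [integral_prod _ i2, integral_prod _ igv, ← integral_const_mul]
    refine integral_mono i2.integral_prod_left (igv.integral_prod_left.const_mul _) fun x => ?_
    exact gauss_poincare d _ (hv x) C (fun v => hB _) (bv x)
  have hX : ∫ q : (Fin d → ℝ) × (Fin d → ℝ), ∫ r : (Fin d → ℝ) × (Fin d → ℝ),
      (f (q.1, r.2) - f (r.1, r.2)) ^ 2 ∂(nu d) ∂(nu d)
      ≤ d * ∫ q, nsq d (gradx d (fun x v => f (x, v)) q.1 q.2) ∂(nu d) := by
    rw [integral_integral_swap (integrable_bdd (C := (2 * C) ^ 2)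
      (by unfold Function.uncurry; fun_prop) fun z => sub_sq_bdd (hB _) (hB _))]
    have h1 : ∀ r : (Fin d → ℝ) × (Fin d → ℝ), ∫ q : (Fin d → ℝ) × (Fin d → ℝ),
        (f (q.1, r.2) - f (r.1, r.2)) ^ 2 ∂(nu d)
        = ∫ x in cube d, (f (r.1, r.2) - f (x, r.2)) ^ 2 := fun r => by
      unfold nu
      rw [integral_fun_fst (fun x => (f (x, r.2) - f (r.1, r.2)) ^ 2)]
      simp only [probReal_univ, one_smul]
      refine integral_congr_ae (ae_of_all _ fun x => ?_)
      simp only; ring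
    simp_rw [h1]
    have i1 : Integrable (fun z : ((Fin d → ℝ) × (Fin d → ℝ)) × (Fin d → ℝ) =>
        (f (z.1.1, z.1.2) - f (z.2, z.1.2)) ^ 2) ((nu d).prod (volume.restrict (cube d))) :=
      integrable_bdd (by fun_prop) fun z => sub_sq_bdd (hB _) (hB _)
    have i2 := i1.integral_prod_left
    unfold nu at i2 igx ⊢
    rw [integral_prod_symm _ i2, integral_prod_symm _ igx, ← integral_const_mul]
    refine integral_mono i2.integral_prod_right (igx.integral_prod_right.const_mul _) fun v => ?_
    exact torus_poincare d _ (hx v) (fun x k => hper x v k) C (bx v)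
  have hsplit : ∫ q, ∫ r, (f q - f r) ^ 2 ∂(nu d) ∂(nu d)
      ≤ 2 * (∫ q : (Fin d → ℝ) × (Fin d → ℝ), ∫ r : (Fin d → ℝ) × (Fin d → ℝ),
          (f (q.1, q.2) - f (q.1, r.2)) ^ 2 ∂(nu d) ∂(nu d))
        + 2 * ∫ q : (Fin d → ℝ) × (Fin d → ℝ), ∫ r : (Fin d → ℝ) × (Fin d → ℝ),
          (f (q.1, r.2) - f (r.1, r.2)) ^ 2 ∂(nu d) ∂(nu d) := by
    have j0 : Integrable (fun z : ((Fin d → ℝ) × (Fin d → ℝ)) × ((Fin d → ℝ) × (Fin d → ℝ)) =>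
        (f z.1 - f z.2) ^ 2) ((nu d).prod (nu d)) :=
      integrable_bdd (by fun_prop) fun z => sub_sq_bdd (hB _) (hB _)
    have j1 : Integrable (fun z : ((Fin d → ℝ) × (Fin d → ℝ)) × ((Fin d → ℝ) × (Fin d → ℝ)) =>
        (f (z.1.1, z.1.2) - f (z.1.1, z.2.2)) ^ 2) ((nu d).prod (nu d)) :=
      integrable_bdd (by fun_prop) fun z => sub_sq_bdd (hB _) (hB _)
    have j2 : Integrable (fun z : ((Fin d → ℝ) × (Fin d → ℝ)) × ((Fin d → ℝ) × (Fin d → ℝ)) =>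
        (f (z.1.1, z.2.2) - f (z.2.1, z.2.2)) ^ 2) ((nu d).prod (nu d)) :=
      integrable_bdd (by fun_prop) fun z => sub_sq_bdd (hB _) (hB _)
    rw [← integral_prod _ j0, ← integral_prod _ j1, ← integral_prod _ j2,
      ← integral_const_mul, ← integral_const_mul, ← integral_add (j1.const_mul _) (j2.const_mul _)]
    refine integral_mono j0 ((j1.const_mul _).add (j2.const_mul _)) fun z => ?_
    simp only [Prod.mk.eta]
    nlinarith [sq_nonneg (f z.1 - f (z.1.1, z.2.2) - (f (z.1.1, z.2.2) - f z.2))]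
  rw [hvar] at hsplit
  rw [integral_add igx igv]
  have nx : 0 ≤ ∫ q, nsq d (gradx d (fun x v => f (x, v)) q.1 q.2) ∂(nu d) :=
    integral_nonneg fun _ => nsq_nonneg' _
  have nv : 0 ≤ ∫ q, nsq d (gradv d (fun x v => f (x, v)) q.1 q.2) ∂(nu d) :=
    integral_nonneg fun _ => nsq_nonneg' _
  have hg0 := gauss_const_nonneg d
  have hd0 : (0:ℝ) ≤ d := Nat.cast_nonneg d
  unfold poinc
  nlinarith [mul_nonneg hg0 nx, mul_nonneg hd0 nv]

/-! ### Observables, free transport and velocity averages -/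

/-- Time–position–velocity space. -/
abbrev Ph (d : ℕ) : Type := ℝ × (Fin d → ℝ) × (Fin d → ℝ)

/-- The class of observables that can be differentiated along the flow: `C¹`, periodic in position,
bounded together with the derivative. -/
structure Good (d : ℕ) (F : Ph d → ℝ) : Prop where
  cd : ContDiff ℝ 1 F
  per : ∀ t x v (k : Fin d → ℤ), F (t, x + (fun i => (k i : ℝ)), v) = F (t, x, v)
  bd : ∃ C, ∀ q, |F q| ≤ C ∧ ‖fderiv ℝ F q‖ ≤ C

/-- The derivative `∂_t + v·∇_x` along free transport. -/
def Lag (d : ℕ) (F : Ph d → ℝ) (q : Ph d) : ℝ := fderiv ℝ F q (1, q.2.2, 0)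

/-- Velocity average, as a function on time–position–velocity space. -/
def avg (d : ℕ) (F : Ph d → ℝ) (q : Ph d) : ℝ := ∫ u, F (q.1, q.2.1, u) ∂(gm d)

namespace Good
variable {d : ℕ} {F G : Ph d → ℝ}

lemma cont (hF : Good d F) : Continuous F := hF.cd.continuous
lemma diff (hF : Good d F) : Differentiable ℝ F := hF.cd.differentiable (by norm_num)
lemma contd (hF : Good d F) : Continuous (fderiv ℝ F) := hF.cd.continuous_fderiv (by norm_num)

lemma const (d : ℕ) (c : ℝ) : Good d (fun _ => c) :=
  ⟨contDiff_const, fun _ _ _ _ => rfl, |c|, fun q => by simp⟩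

lemma add (hF : Good d F) (hG : Good d G) : Good d (fun q => F q + G q) := by
  obtain ⟨C, hC⟩ := hF.bd
  obtain ⟨D, hD⟩ := hG.bd
  refine ⟨hF.cd.add hG.cd, fun t x v k => by rw [hF.per, hG.per], C + D, fun q => ⟨?_, ?_⟩⟩
  · exact (abs_add_le _ _).trans (add_le_add (hC q).1 (hD q).1)
  · rw [((hF.diff q).hasFDerivAt.fun_add (hG.diff q).hasFDerivAt).fderiv]
    exact (norm_add_le _ _).trans (add_le_add (hC q).2 (hD q).2)

lemma mul (hF : Good d F) (hG : Good d G) : Good d (fun q => F q * G q) := by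
  obtain ⟨C, hC⟩ := hF.bd
  obtain ⟨D, hD⟩ := hG.bd
  have hC0 : 0 ≤ C := (abs_nonneg _).trans (hC 0).1
  have hD0 : 0 ≤ D := (abs_nonneg _).trans (hD 0).1
  refine ⟨hF.cd.mul hG.cd, fun t x v k => by rw [hF.per, hG.per], C * D + D * C,
    fun q => ⟨?_, ?_⟩⟩
  · rw [abs_mul]
    have := mul_le_mul (hC q).1 (hD q).1 (abs_nonneg _) hC0
    nlinarith [mul_nonneg hC0 hD0]
  · rw [((hF.diff q).hasFDerivAt.fun_mul (hG.diff q).hasFDerivAt).fderiv]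
    refine (norm_add_le _ _).trans (add_le_add ?_ ?_)
    · rw [norm_smul]; exact mul_le_mul (hC q).1 (hD q).2 (norm_nonneg _) hC0
    · rw [norm_smul]; exact mul_le_mul (hD q).1 (hC q).2 (norm_nonneg _) hD0

lemma const_mul (hF : Good d F) (c : ℝ) : Good d (fun q => c * F q) := (const d c).mul hF

lemma sum {F : Fin d → Ph d → ℝ} (s : Finset (Fin d)) (hF : ∀ i, Good d (F i)) :
    Good d (fun q => ∑ i ∈ s, F i q) := by
  classical
  induction s using Finset.induction_on with
  | empty => simpa using const d 0
  | insert a s ha ih => simp_rw [Finset.sum_insert ha]; exact (hF a).add ih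

lemma rpow (hF : Good d F) {c : ℝ} (hc : 0 < c) (hFc : ∀ q, c ≤ F q) (r : ℝ) :
    Good d (fun q => F q ^ r) := by
  obtain ⟨C, hC⟩ := hF.bd
  have hC0 : 0 ≤ C := (abs_nonneg _).trans (hC 0).1
  have hpos : ∀ q, F q ≠ 0 := fun q => (hc.trans_le (hFc q)).ne'
  have hcomp : ∀ s : ℝ, ∃ D, ∀ q, |F q ^ s| ≤ D := by
    intro s
    obtain ⟨D, hD⟩ := isCompact_Icc.exists_bound_of_continuousOn (s := Set.Icc c C)
      (f := fun y : ℝ => y ^ s)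
      (fun y hy => (continuousAt_rpow_const y s
        (Or.inl (hc.trans_le hy.1).ne')).continuousWithinAt)
    exact ⟨D, fun q => hD _ ⟨hFc q, (le_abs_self _).trans (hC q).1⟩⟩
  obtain ⟨D, hD⟩ := hcomp r
  obtain ⟨D', hD'⟩ := hcomp (r - 1)
  have hD'0 : 0 ≤ D' := (abs_nonneg _).trans (hD' 0)
  refine ⟨hF.cd.rpow_const_of_ne hpos, fun t x v k => by rw [hF.per],
    D + |r| * D' * C, fun q => ⟨?_, ?_⟩⟩
  · have := hD q
    have : 0 ≤ |r| * D' * C := by positivity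
    linarith [hD q]
  · rw [((hF.diff q).hasFDerivAt.rpow_const (Or.inl (hpos q))).fderiv, norm_smul, norm_mul]
    have h0 : 0 ≤ D := (abs_nonneg _).trans (hD q)
    have : ‖r‖ * ‖F q ^ (r - 1)‖ * ‖fderiv ℝ F q‖ ≤ |r| * D' * C := by
      refine mul_le_mul ?_ (hC q).2 (norm_nonneg _) (by positivity)
      exact mul_le_mul_of_nonneg_left (hD' q) (abs_nonneg _)
    linarith

lemma intg (hF : Good d F) (t : ℝ) :
    Integrable (fun z : (Fin d → ℝ) × (Fin d → ℝ) => F (t, z.1, z.2)) (nu d) := by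
  obtain ⟨C, hC⟩ := hF.bd
  have := hF.cont
  exact integrable_bdd (by fun_prop) fun z => (hC _).1

lemma intg_gm (hF : Good d F) (t : ℝ) (x : Fin d → ℝ) :
    Integrable (fun u => F (t, x, u)) (gm d) := by
  obtain ⟨C, hC⟩ := hF.bd
  have := hF.cont
  exact integrable_bdd (by fun_prop) fun z => (hC _).1

lemma intg_cube (hF : Good d F) (t : ℝ) (v : Fin d → ℝ) :
    Integrable (fun x => F (t, x, v)) (volume.restrict (cube d)) := by
  obtain ⟨C, hC⟩ := hF.bd
  have := hF.cont
  exact integrable_bdd (by fun_prop) fun z => (hC _).1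

end Good

section
variable {d : ℕ} {F G : Ph d → ℝ}

lemma Lag_mul (hF : Good d F) (hG : Good d G) (q : Ph d) :
    Lag d (fun q => F q * G q) q = F q * Lag d G q + G q * Lag d F q := by
  unfold Lag
  rw [((hF.diff q).hasFDerivAt.fun_mul (hG.diff q).hasFDerivAt).fderiv]
  simp

lemma Lag_add (hF : Good d F) (hG : Good d G) (q : Ph d) :
    Lag d (fun q => F q + G q) q = Lag d F q + Lag d G q := by
  unfold Lag
  rw [((hF.diff q).hasFDerivAt.fun_add (hG.diff q).hasFDerivAt).fderiv]
  simp

lemma Lag_const_mul (hF : Good d F) (c : ℝ) (q : Ph d) :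
    Lag d (fun q => c * F q) q = c * Lag d F q := by
  unfold Lag
  rw [((hF.diff q).hasFDerivAt.const_mul c).fderiv]
  simp

lemma Lag_sum {F : Fin d → Ph d → ℝ} (hF : ∀ i, Good d (F i)) (q : Ph d) :
    Lag d (fun q => ∑ i, F i q) q = ∑ i, Lag d (F i) q := by
  unfold Lag
  rw [(HasFDerivAt.fun_sum fun i _ => ((hF i).diff q).hasFDerivAt).fderiv]
  simp

lemma Lag_rpow (hF : Good d F) {q : Ph d} (h0 : F q ≠ 0) (r : ℝ) :
    Lag d (fun q => F q ^ r) q = r * F q ^ (r - 1) * Lag d F q := by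
  unfold Lag
  rw [((hF.diff q).hasFDerivAt.rpow_const (Or.inl h0)).fderiv]
  simp

lemma norm_dir (v : Fin d → ℝ) : ‖((1, v, 0) : Ph d)‖ ≤ 1 + ‖v‖ := by
  rw [Prod.norm_def, Prod.norm_def]
  simp only [norm_one, norm_zero]
  refine max_le ?_ (max_le ?_ ?_) <;> linarith [norm_nonneg v]

lemma integrable_one_add_norm_nu (d : ℕ) :
    Integrable (fun z : (Fin d → ℝ) × (Fin d → ℝ) => 1 + ‖z.2‖) (nu d) := by
  refine (integrable_const _).add ?_
  exact (integrable_norm_gm d).comp_snd _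

lemma Lag_intg (hF : Good d F) (t : ℝ) :
    Integrable (fun z : (Fin d → ℝ) × (Fin d → ℝ) => Lag d F (t, z.1, z.2)) (nu d) := by
  obtain ⟨C, hC⟩ := hF.bd
  have hC0 : 0 ≤ C := (abs_nonneg _).trans (hC 0).1
  refine ((integrable_one_add_norm_nu d).const_mul C).mono' ?_ (ae_of_all _ fun z => ?_)
  · have := hF.contd
    refine Continuous.aestronglyMeasurable ?_
    unfold Lag; fun_prop
  · refine ((fderiv ℝ F _).le_opNorm _).trans ?_
    exact mul_le_mul (hC _).2 (norm_dir _) (norm_nonneg _) hC0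

/-- `μ` is invariant under free transport. -/
lemma transport_inv (hF : Good d F) (t s : ℝ) :
    ∫ z : (Fin d → ℝ) × (Fin d → ℝ), F (t, z.1 + s • z.2, z.2) ∂(nu d)
      = ∫ z : (Fin d → ℝ) × (Fin d → ℝ), F (t, z.1, z.2) ∂(nu d) := by
  obtain ⟨C, hC⟩ := hF.bd
  have hc := hF.cont
  have i1 : Integrable (fun z : (Fin d → ℝ) × (Fin d → ℝ) => F (t, z.1 + s • z.2, z.2)) (nu d) :=
    integrable_bdd (by fun_prop) fun z => (hC _).1
  have i2 := hF.intg t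
  unfold nu at *
  rw [integral_prod_symm _ i1, integral_prod_symm _ i2]
  refine integral_congr_ae (ae_of_all _ fun v => ?_)
  exact cube_translate d (fun x => F (t, x, v)) (fun x k => hF.per t x v k) (s • v)

/-- Differentiation in time of an integral against the invariant measure, along free transport. -/
lemma hasDerivAt_integral (hF : Good d F) (t0 : ℝ) :
    HasDerivAt (fun t => ∫ z : (Fin d → ℝ) × (Fin d → ℝ), F (t, z.1, z.2) ∂(nu d))
      (∫ z : (Fin d → ℝ) × (Fin d → ℝ), Lag d F (t0, z.1, z.2) ∂(nu d)) t0 := by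
  obtain ⟨C, hC⟩ := hF.bd
  have hC0 : 0 ≤ C := (abs_nonneg _).trans (hC 0).1
  have hc := hF.cont
  have hcd := hF.contd
  have e : (fun t => ∫ z : (Fin d → ℝ) × (Fin d → ℝ), F (t, z.1, z.2) ∂(nu d))
      = fun t => ∫ z : (Fin d → ℝ) × (Fin d → ℝ), F (t, z.1 + (t - t0) • z.2, z.2) ∂(nu d) := by
    funext t; exact (transport_inv hF t (t - t0)).symm
  rw [e]
  have key := hasDerivAt_integral_of_dominated_loc_of_deriv_le (μ := nu d) (x₀ := t0)
    (s := Set.univ)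
    (F := fun t (z : (Fin d → ℝ) × (Fin d → ℝ)) => F (t, z.1 + (t - t0) • z.2, z.2))
    (F' := fun t (z : (Fin d → ℝ) × (Fin d → ℝ)) => Lag d F (t, z.1 + (t - t0) • z.2, z.2))
    (bound := fun z => C * (1 + ‖z.2‖)) univ_mem
    (Eventually.of_forall fun t => Continuous.aestronglyMeasurable (by fun_prop))
    (by simpa using hF.intg t0)
    (Continuous.aestronglyMeasurable (by unfold Lag; fun_prop))
    (ae_of_all _ fun z t _ => ((fderiv ℝ F _).le_opNorm _).trans
      (mul_le_mul (hC _).2 (norm_dir _) (norm_nonneg _) hC0))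
    ((integrable_one_add_norm_nu d).const_mul C)
    (ae_of_all _ fun z t _ => ?_)
  · simpa using key.2
  · have h1 : HasDerivAt (fun t : ℝ => ((t, z.1 + (t - t0) • z.2, z.2) : Ph d))
        (1, z.2, 0) t := by
      refine (hasDerivAt_id t).prodMk (HasDerivAt.prodMk ?_ (hasDerivAt_const t z.2))
      simpa using (((hasDerivAt_id t).sub_const t0).smul_const z.2).const_add z.1
    exact (hF.diff _).hasFDerivAt.comp_hasDerivAt t h1

/-- Forgetting the velocity. -/
def forget (d : ℕ) : Ph d →L[ℝ] Ph d :=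
  (ContinuousLinearMap.fst ℝ ℝ ((Fin d → ℝ) × (Fin d → ℝ))).prod
    (((ContinuousLinearMap.fst ℝ (Fin d → ℝ) (Fin d → ℝ)).comp
      (ContinuousLinearMap.snd ℝ ℝ ((Fin d → ℝ) × (Fin d → ℝ)))).prod 0)

lemma forget_apply (q : Ph d) : forget d q = (q.1, q.2.1, 0) := rfl

lemma norm_forget : ‖forget d‖ ≤ 1 := by
  refine ContinuousLinearMap.opNorm_le_bound _ zero_le_one fun q => ?_
  rw [forget_apply, one_mul, Prod.norm_def, Prod.norm_def, Prod.norm_def, Prod.norm_def]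
  simp only [norm_zero]
  exact max_le_max le_rfl (max_le_max le_rfl (norm_nonneg _))

lemma forget_comp_bd {C : ℝ} (hC : ∀ q, |F q| ≤ C ∧ ‖fderiv ℝ F q‖ ≤ C) (q : Ph d) :
    ‖(fderiv ℝ F q).comp (forget d)‖ ≤ C := by
  have hC0 : 0 ≤ C := (abs_nonneg _).trans (hC 0).1
  refine (ContinuousLinearMap.opNorm_comp_le _ _).trans ?_
  exact (mul_le_mul (hC _).2 norm_forget (norm_nonneg _) hC0).trans (by simp)

lemma hasFDerivAt_avg (hF : Good d F) (q : Ph d) :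
    HasFDerivAt (avg d F) (∫ u, (fderiv ℝ F (q.1, q.2.1, u)).comp (forget d) ∂(gm d)) q := by
  obtain ⟨C, hC⟩ := hF.bd
  have hc := hF.cont
  have hcd := hF.contd
  have key := hasFDerivAt_integral_of_dominated_of_fderiv_le (μ := gm d) (x₀ := q)
    (s := Set.univ) (𝕜 := ℝ)
    (F := fun (q : Ph d) (u : Fin d → ℝ) => F (q.1, q.2.1, u))
    (F' := fun (q : Ph d) (u : Fin d → ℝ) => (fderiv ℝ F (q.1, q.2.1, u)).comp (forget d))
    (bound := fun _ => C) univ_mem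
    (Eventually.of_forall fun t => Continuous.aestronglyMeasurable (by fun_prop))
    (hF.intg_gm _ _)
    (Continuous.aestronglyMeasurable (by fun_prop))
    (ae_of_all _ fun u q _ => forget_comp_bd hC _)
    (integrable_const _)
    (ae_of_all _ fun u q _ => ?_)
  · exact key
  · have h1 : HasFDerivAt (fun q : Ph d => ((q.1, q.2.1, u) : Ph d)) (forget d) q := by
      have := (forget d).hasFDerivAt (x := q) |>.add_const ((0, 0, u) : Ph d)
      have e : (fun q : Ph d => ((q.1, q.2.1, u) : Ph d))
          = fun q => forget d q + ((0, 0, u) : Ph d) := by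
        funext q; simp [forget_apply]
      rw [e]; exact this
    exact (hF.diff _).hasFDerivAt.comp q h1

lemma fderiv_avg_apply (hF : Good d F) (q w : Ph d) :
    fderiv ℝ (avg d F) q w = ∫ u, fderiv ℝ F (q.1, q.2.1, u) (w.1, w.2.1, 0) ∂(gm d) := by
  obtain ⟨C, hC⟩ := hF.bd
  have hcd := hF.contd
  rw [(hasFDerivAt_avg hF q).fderiv, ContinuousLinearMap.integral_apply]
  · rfl
  · refine Integrable.mono' (integrable_const C)
      (Continuous.aestronglyMeasurable (by fun_prop)) (ae_of_all _ fun u => forget_comp_bd hC _)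

lemma Good.avg (hF : Good d F) : Good d (avg d F) := by
  obtain ⟨C, hC⟩ := hF.bd
  have hc := hF.cont
  have hcd := hF.contd
  refine ⟨?_, fun t x v k => ?_, C, fun q => ⟨?_, ?_⟩⟩
  · rw [contDiff_one_iff_fderiv]
    refine ⟨fun q => (hasFDerivAt_avg hF q).differentiableAt, ?_⟩
    have : fderiv ℝ (_root_.avg d F)
        = fun q => ∫ u, (fderiv ℝ F (q.1, q.2.1, u)).comp (forget d) ∂(gm d) :=
      funext fun q => (hasFDerivAt_avg hF q).fderiv
    rw [this]
    refine continuous_of_dominated (bound := fun _ => C)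
      (fun q => Continuous.aestronglyMeasurable (by fun_prop))
      (fun q => ae_of_all _ fun u => forget_comp_bd hC _) (integrable_const _)
      (ae_of_all _ fun u => by fun_prop)
  · unfold _root_.avg; simp_rw [hF.per]
  · have := norm_integral_le_of_norm_le_const (μ := gm d) (f := fun u => F (q.1, q.2.1, u))
      (C := C) (ae_of_all _ fun u => (hC _).1)
    simpa [_root_.avg] using this
  · rw [(hasFDerivAt_avg hF q).fderiv]
    have := norm_integral_le_of_norm_le_const (μ := gm d)
      (f := fun u => (fderiv ℝ F (q.1, q.2.1, u)).comp (forget d))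
      (C := C) (ae_of_all _ fun u => forget_comp_bd hC _)
    simpa using this

/-- A function that does not depend on velocity can be taken out of the velocity average. -/
lemma integral_mul_avg {K : Ph d → ℝ} (hK : Good d K) (hKv : ∀ t x v, K (t, x, v) = K (t, x, 0))
    (hF : Good d F) (t : ℝ) :
    ∫ z : (Fin d → ℝ) × (Fin d → ℝ), K (t, z.1, z.2) * F (t, z.1, z.2) ∂(nu d)
      = ∫ z : (Fin d → ℝ) × (Fin d → ℝ), K (t, z.1, z.2) * avg d F (t, z.1, z.2) ∂(nu d) := by
  have i1 := (hK.mul hF).intg t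
  have i2 := (hK.mul hF.avg).intg t
  unfold nu at *
  rw [integral_prod _ i1, integral_prod _ i2]
  refine integral_congr_ae (ae_of_all _ fun x => ?_)
  simp only [hKv t x, integral_const_mul, avg]
  simp

/-- Directional derivatives of a periodic `C²` function with bounded first and second derivatives
are admissible observables. -/
lemma Good.fderiv_apply (hF : ContDiff ℝ 2 F)
    (hper : ∀ t x v (k : Fin d → ℤ), F (t, x + (fun i => (k i : ℝ)), v) = F (t, x, v))
    {C : ℝ} (h1 : ∀ q, ‖fderiv ℝ F q‖ ≤ C) (h2 : ∀ q, ‖fderiv ℝ (fderiv ℝ F) q‖ ≤ C) (w : Ph d) :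
    Good d (fun q => fderiv ℝ F q w) := by
  have hcd : ContDiff ℝ 1 (fderiv ℝ F) := hF.fderiv_right (by norm_num)
  have hdd := hcd.differentiable (by norm_num)
  refine ⟨hcd.clm_apply contDiff_const, fun t x v k => ?_, C * ‖w‖, fun q => ⟨?_, ?_⟩⟩
  · have e : (fun q : Ph d => F (q + (0, (fun i => (k i : ℝ)), 0))) = F := by
      funext q; obtain ⟨t, x, v⟩ := q; simpa using hper t x v k
    have := fderiv_comp_add_right (𝕜 := ℝ) (f := F) (x := ((t, x, v) : Ph d))
      ((0, (fun i => (k i : ℝ)), 0) : Ph d)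
    rw [e] at this
    rw [this]; simp
  · exact ((fderiv ℝ F q).le_opNorm w).trans (mul_le_mul_of_nonneg_right (h1 q) (norm_nonneg _))
  · have : HasFDerivAt (fun q => fderiv ℝ F q w) ((fderiv ℝ (fderiv ℝ F) q).flip w) q :=
      (ContinuousLinearMap.apply ℝ ℝ w).hasFDerivAt.comp q (hdd q).hasFDerivAt
    rw [this.fderiv]
    refine ContinuousLinearMap.opNorm_le_bound _
      (mul_nonneg ((norm_nonneg _).trans (h1 q)) (norm_nonneg _)) fun y => ?_
    rw [ContinuousLinearMap.flip_apply]
    refine ((fderiv ℝ (fderiv ℝ F) q).le_opNorm₂ y w).trans ?_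
    have := mul_le_mul_of_nonneg_right (h2 q) (mul_nonneg (norm_nonneg y) (norm_nonneg w))
    linarith

end

/-! ### Equations for the derivatives of a solution -/

/-- The facts about a solution `H` of the equation that enter the entropy argument, where `A i` and
`B i` stand for its partial derivatives in position and velocity. -/
structure KinFlow (d : ℕ) (lam : ℝ) (H : Ph d → ℝ) (A B : Fin d → Ph d → ℝ) : Prop where
  gH : Good d H
  gA : ∀ i, Good d (A i)
  gB : ∀ i, Good d (B i)
  gT : Good d (fun q => fderiv ℝ H q (1, 0, 0))
  lo : ∃ c, 0 < c ∧ ∀ q, c ≤ H q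
  LH : ∀ q : Ph d, 0 ≤ q.1 → Lag d H q = lam * (avg d H q - H q)
  LA : ∀ i (q : Ph d), 0 ≤ q.1 → Lag d (A i) q = lam * (avg d (A i) q - A i q)
  LB : ∀ i (q : Ph d), 0 ≤ q.1 → Lag d (B i) q = - A i q - lam * B i q
  eA : ∀ i q, A i q = fderiv ℝ H q (0, Pi.single i 1, 0)
  eB : ∀ i q, B i q = fderiv ℝ H q (0, 0, Pi.single i 1)
  mass : ∀ t, 0 ≤ t → ∫ z : (Fin d → ℝ) × (Fin d → ℝ), H (t, z.1, z.2) ∂(nu d) = 1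

section
variable {d : ℕ}

lemma avg_eq_proj (h : ℝ → (Fin d → ℝ) → (Fin d → ℝ) → ℝ) (q : Ph d) :
    avg d (fun q => h q.1 q.2.1 q.2.2) q = proj d (h q.1) q.2.1 := by
  unfold avg proj
  exact integral_gm d _

/-- The equation differentiated in the direction `(ξ, η)` of position and velocity. The last term is
the commutator of the velocity derivative with transport. -/
lemma Lag_fderiv {lam : ℝ} {H : Ph d → ℝ} (hH : ContDiff ℝ 2 H) (gH : Good d H)
    (LH : ∀ q : Ph d, 0 ≤ q.1 → Lag d H q = lam * (avg d H q - H q))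
    (q : Ph d) (hq : 0 ≤ q.1) (ξ η : Fin d → ℝ) :
    Lag d (fun q => fderiv ℝ H q (0, ξ, η)) q
      = lam * (fderiv ℝ (avg d H) q (0, ξ, η) - fderiv ℝ H q (0, ξ, η))
        - fderiv ℝ H q (0, η, 0) := by
  have hcd : ContDiff ℝ 1 (fderiv ℝ H) := hH.fderiv_right (by norm_num)
  have hdd := hcd.differentiable (by norm_num)
  set w : Ph d := (0, ξ, η) with hw
  have hL : Lag d (fun q => fderiv ℝ H q w) q = fderiv ℝ (fderiv ℝ H) q (1, q.2.2, 0) w := by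
    have : HasFDerivAt (fun q => fderiv ℝ H q w) ((fderiv ℝ (fderiv ℝ H) q).flip w) q :=
      (ContinuousLinearMap.apply ℝ ℝ w).hasFDerivAt.comp q (hdd q).hasFDerivAt
    unfold Lag; rw [this.fderiv]; rfl
  have hsymm : fderiv ℝ (fderiv ℝ H) q (1, q.2.2, 0) w = fderiv ℝ (fderiv ℝ H) q w (1, q.2.2, 0) :=
    (hH.contDiffAt.isSymmSndFDerivAt (by simp)).eq _ _
  -- differentiate the equation along the line `s ↦ q + s w`, on which time is constant
  have hline : HasDerivAt (fun s : ℝ => q + s • w) w 0 := by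
    simpa using ((hasDerivAt_id (0:ℝ)).smul_const w).const_add q
  have hq0 : q = q + (0:ℝ) • w := by simp
  have d1 : HasDerivAt (fun s : ℝ => Lag d H (q + s • w))
      (fderiv ℝ (fderiv ℝ H) q w (1, q.2.2, 0) + fderiv ℝ H q (0, η, 0)) 0 := by
    have a1 : HasDerivAt (fun s : ℝ => fderiv ℝ H (q + s • w)) (fderiv ℝ (fderiv ℝ H) q w) 0 := by
      refine HasFDerivAt.comp_hasDerivAt (0:ℝ) ?_ hline
      rw [← hq0]; exact (hdd q).hasFDerivAt
    have a2 : HasDerivAt (fun s : ℝ => ((1, (q + s • w).2.2, 0) : Ph d)) (0, η, 0) 0 := by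
      refine (hasDerivAt_const _ _).prodMk (HasDerivAt.prodMk ?_ (hasDerivAt_const _ _))
      simpa [hw] using ((hasDerivAt_id (0:ℝ)).smul_const η).const_add q.2.2
    have := a1.clm_apply a2
    simpa [Lag] using this
  have d2 : HasDerivAt (fun s : ℝ => Lag d H (q + s • w))
      (lam * (fderiv ℝ (avg d H) q w - fderiv ℝ H q w)) 0 := by
    have e : (fun s : ℝ => Lag d H (q + s • w))
        = fun s => lam * (avg d H (q + s • w) - H (q + s • w)) := by
      funext s; refine LH _ ?_; simpa [hw] using hq
    rw [e]
    have c1 : HasDerivAt (fun s : ℝ => avg d H (q + s • w)) (fderiv ℝ (avg d H) q w) 0 := by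
      have hf : HasFDerivAt (avg d H) (fderiv ℝ (avg d H) q) (q + (0:ℝ) • w) := by
        rw [← hq0]; exact (gH.avg.diff q).hasFDerivAt
      exact hf.comp_hasDerivAt (0:ℝ) hline
    have c2 : HasDerivAt (fun s : ℝ => H (q + s • w)) (fderiv ℝ H q w) 0 := by
      have hf : HasFDerivAt H (fderiv ℝ H q) (q + (0:ℝ) • w) := by
        rw [← hq0]; exact (gH.diff q).hasFDerivAt
      exact hf.comp_hasDerivAt (0:ℝ) hline
    exact (c1.sub c2).const_mul lam
  have := d1.unique d2
  rw [hL, hsymm]; linarith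

lemma gradx_eq {H : Ph d → ℝ} (hH : Differentiable ℝ H) (t : ℝ) (x v : Fin d → ℝ) (i : Fin d) :
    gradx d (fun x v => H (t, x, v)) x v i = fderiv ℝ H (t, x, v) (0, Pi.single i 1, 0) := by
  have h1 : HasFDerivAt (fun y => ((t, y, v) : Ph d))
      ((0 : (Fin d → ℝ) →L[ℝ] ℝ).prod ((ContinuousLinearMap.id ℝ _).prod 0)) x :=
    (hasFDerivAt_const t x).prodMk ((hasFDerivAt_id x).prodMk (hasFDerivAt_const v x))
  unfold gradx
  have := ((hH (t, x, v)).hasFDerivAt.comp x h1).fderiv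
  simp only [Function.comp_def] at this
  rw [this]; rfl

lemma fderivv_eq {H : Ph d → ℝ} (hH : Differentiable ℝ H) (t : ℝ) (x v : Fin d → ℝ) :
    fderiv ℝ (fun v => H (t, x, v)) v
      = (fderiv ℝ H (t, x, v)).comp ((0 : (Fin d → ℝ) →L[ℝ] ℝ).prod
          ((0 : (Fin d → ℝ) →L[ℝ] (Fin d → ℝ)).prod (ContinuousLinearMap.id ℝ _))) := by
  have h1 : HasFDerivAt (fun y => ((t, x, y) : Ph d))
      ((0 : (Fin d → ℝ) →L[ℝ] ℝ).prod
          ((0 : (Fin d → ℝ) →L[ℝ] (Fin d → ℝ)).prod (ContinuousLinearMap.id ℝ _))) v :=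
    (hasFDerivAt_const t v).prodMk ((hasFDerivAt_const x v).prodMk (hasFDerivAt_id v))
  exact ((hH (t, x, v)).hasFDerivAt.comp v h1).fderiv

lemma gradv_eq {H : Ph d → ℝ} (hH : Differentiable ℝ H) (t : ℝ) (x v : Fin d → ℝ) (i : Fin d) :
    gradv d (fun x v => H (t, x, v)) x v i = fderiv ℝ H (t, x, v) (0, 0, Pi.single i 1) := by
  unfold gradv
  rw [fderivv_eq hH]; rfl

/-- Decomposition of the transport derivative into partial derivatives. -/
lemma Lag_eq_sum (H : Ph d → ℝ) (q : Ph d) :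
    Lag d H q = fderiv ℝ H q (1, 0, 0) + ∑ i, q.2.2 i * fderiv ℝ H q (0, Pi.single i 1, 0) := by
  have e : ((1, q.2.2, 0) : Ph d) = (1, 0, 0) + ∑ i, q.2.2 i • ((0, Pi.single i 1, 0) : Ph d) := by
    have : ∑ i, q.2.2 i • ((0, Pi.single i 1, 0) : Ph d) = (0, q.2.2, 0) := by
      rw [Prod.ext_iff, Prod.ext_iff]
      refine ⟨by simp [Prod.fst_sum], ?_, by simp [Prod.snd_sum]⟩
      rw [Prod.snd_sum, Prod.fst_sum]
      funext j
      simp [Finset.sum_apply, Pi.single_apply]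
    rw [this]; simp
  unfold Lag
  rw [e, map_add, map_sum]
  simp_rw [map_smul, smul_eq_mul]

/-- Every regular normalized solution is a `KinFlow`. -/
lemma flow_of_regular {lam : ℝ} {h : ℝ → (Fin d → ℝ) → (Fin d → ℝ) → ℝ} (hR : Regular d h)
    (hm : ∀ t, 0 ≤ t → intMu d (h t) = 1) (hS : SolvesLRB d lam h) :
    KinFlow d lam (fun q => h q.1 q.2.1 q.2.2)
      (fun i q => fderiv ℝ (fun q : Ph d => h q.1 q.2.1 q.2.2) q (0, Pi.single i 1, 0))
      (fun i q => fderiv ℝ (fun q : Ph d => h q.1 q.2.1 q.2.2) q (0, 0, Pi.single i 1)) := by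
  obtain ⟨hcd, hper, ⟨c, C, hc, hcC⟩, hit⟩ := hR
  set H : Ph d → ℝ := fun q => h q.1 q.2.1 q.2.2 with hH
  have hper' : ∀ t x v (k : Fin d → ℤ), H (t, x + (fun i => (k i : ℝ)), v) = H (t, x, v) :=
    fun t x v k => hper t x v k
  obtain ⟨C1, hC1⟩ := hit 1
  obtain ⟨C2, hC2⟩ := hit 2
  have b1 : ∀ q, ‖fderiv ℝ H q‖ ≤ C1 := fun q => by
    have := hC1 q
    rwa [← norm_iteratedFDeriv_fderiv, norm_iteratedFDeriv_zero] at this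
  have b2 : ∀ q, ‖fderiv ℝ (fderiv ℝ H) q‖ ≤ C2 := fun q => by
    have := hC2 q
    rwa [← norm_iteratedFDeriv_fderiv, ← norm_iteratedFDeriv_fderiv,
      norm_iteratedFDeriv_zero] at this
  have hcd2 : ContDiff ℝ 2 H := contDiff_infty.1 hcd 2
  have gH : Good d H := by
    refine ⟨hcd.of_le (by exact_mod_cast le_top), hper', max C C1, fun q => ⟨?_, ?_⟩⟩
    · have := hcC q.1 q.2.1 q.2.2
      rw [abs_of_pos (hc.trans_le this.1)]
      exact this.2.trans (le_max_left _ _)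
    · exact (b1 q).trans (le_max_right _ _)
  have gD : ∀ w, Good d (fun q => fderiv ℝ H q w) :=
    Good.fderiv_apply hcd2 hper' (fun q => (b1 q).trans (le_max_left C1 C2))
      (fun q => (b2 q).trans (le_max_right C1 C2))
  have LH : ∀ q : Ph d, 0 ≤ q.1 → Lag d H q = lam * (avg d H q - H q) := by
    rintro ⟨t, x, v⟩ hq
    have := hS t x v hq
    rw [avg_eq_proj, ← this, Lag_eq_sum]
    congr 1
    · have h1 : HasDerivAt (fun s : ℝ => ((s, x, v) : Ph d)) (1, 0, 0) t :=
        (hasDerivAt_id t).prodMk ((hasDerivAt_const t x).prodMk (hasDerivAt_const t v))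
      exact (((gH.diff (t, x, v)).hasFDerivAt.comp_hasDerivAt t h1).deriv).symm
    · unfold dotp
      refine Finset.sum_congr rfl fun i _ => ?_
      rw [← gradx_eq gH.diff]
  refine ⟨gH, fun i => gD _, fun i => gD _, gD _, ⟨c, hc, fun q => (hcC _ _ _).1⟩, LH, ?_, ?_,
    fun _ _ => rfl, fun _ _ => rfl, ?_⟩
  · intro i q hq
    rw [Lag_fderiv hcd2 gH LH q hq, fderiv_avg_apply gH]
    have : fderiv ℝ H q (0, 0, 0) = 0 := map_zero (fderiv ℝ H q)
    rw [this, sub_zero]; rfl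
  · intro i q hq
    rw [Lag_fderiv hcd2 gH LH q hq, fderiv_avg_apply gH]
    have : ∀ q, fderiv ℝ H q (0, 0, 0) = 0 := fun q => map_zero (fderiv ℝ H q)
    simp only [this, integral_zero]; ring
  · intro t ht
    rw [← hm t ht, intMu_eq (gH.intg t)]

end

/-! ### Time derivative of the projected entropy -/

section
variable {d : ℕ} {K F : Ph d → ℝ}

lemma integrable_coord_mul (hK : Good d K) (hF : Good d F) (t : ℝ) (i : Fin d) :
    Integrable (fun z : (Fin d → ℝ) × (Fin d → ℝ) =>
      K (t, z.1, z.2) * (z.2 i * F (t, z.1, z.2))) (nu d) := by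
  obtain ⟨C, hC⟩ := (hK.mul hF).bd
  have hC0 : 0 ≤ C := (abs_nonneg _).trans (hC 0).1
  have := hK.cont
  have := hF.cont
  refine ((integrable_one_add_norm_nu d).const_mul C).mono'
    (Continuous.aestronglyMeasurable (by fun_prop)) (ae_of_all _ fun z => ?_)
  have h1 := (hC (t, z.1, z.2)).1
  have h2 : |z.2 i| ≤ 1 + ‖z.2‖ := (norm_le_pi_norm z.2 i).trans (by linarith)
  calc ‖K (t, z.1, z.2) * (z.2 i * F (t, z.1, z.2))‖
      = |K (t, z.1, z.2) * F (t, z.1, z.2)| * |z.2 i| := by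
        rw [Real.norm_eq_abs, ← abs_mul]; ring_nf
    _ ≤ C * (1 + ‖z.2‖) := mul_le_mul h1 h2 (abs_nonneg _) hC0

lemma integrable_mul_fderiv (hK : Good d K) (hF : Good d F) (t : ℝ) (w : Ph d) :
    Integrable (fun z : (Fin d → ℝ) × (Fin d → ℝ) =>
      K (t, z.1, z.2) * fderiv ℝ F (t, z.1, z.2) w) (nu d) := by
  obtain ⟨C, hC⟩ := hK.bd
  obtain ⟨D, hD⟩ := hF.bd
  have hC0 : 0 ≤ C := (abs_nonneg _).trans (hC 0).1
  have := hK.cont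
  have := hF.contd
  refine integrable_bdd (C := C * (D * ‖w‖)) (by fun_prop) fun z => ?_
  rw [abs_mul]
  refine mul_le_mul (hC _).1 ?_ (abs_nonneg _) hC0
  exact ((fderiv ℝ F _).le_opNorm w).trans (mul_le_mul_of_nonneg_right (hD _).2 (norm_nonneg _))

/-- Gaussian integration by parts against `μ`, with a factor `K` that does not depend on velocity. -/
lemma ibp_nu (hK : Good d K) (hKv : ∀ t x v, K (t, x, v) = K (t, x, 0)) (hF : Good d F) (t : ℝ)
    (i : Fin d) :
    ∫ z : (Fin d → ℝ) × (Fin d → ℝ), K (t, z.1, z.2) * (z.2 i * F (t, z.1, z.2)) ∂(nu d)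
      = ∫ z : (Fin d → ℝ) × (Fin d → ℝ),
          K (t, z.1, z.2) * fderiv ℝ F (t, z.1, z.2) (0, 0, Pi.single i 1) ∂(nu d) := by
  have i1 := integrable_coord_mul hK hF t i
  have i2 := integrable_mul_fderiv hK hF t (0, 0, Pi.single i 1)
  obtain ⟨C, hC⟩ := hF.bd
  have hC0 : 0 ≤ C := (abs_nonneg _).trans (hC 0).1
  unfold nu at *
  rw [integral_prod _ i1, integral_prod _ i2]
  refine integral_congr_ae (ae_of_all _ fun x => ?_)
  simp only [hKv t x, integral_const_mul]
  congr 1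
  have hcd : ContDiff ℝ 1 fun v => F (t, x, v) := hF.cd.comp (by fun_prop)
  rw [gauss_ibp d (fun v => F (t, x, v)) i hcd C (fun v => (hC _).1) fun v => ?_]
  · refine integral_congr_ae (ae_of_all _ fun v => ?_)
    exact gradv_eq hF.diff t x v i
  · rw [fderivv_eq hF.diff]
    refine ContinuousLinearMap.opNorm_le_bound _ hC0 fun y => ?_
    refine ((fderiv ℝ F (t, x, v)).le_opNorm _).trans ?_
    refine mul_le_mul (hC _).2 ?_ (norm_nonneg _) hC0
    simp [Prod.norm_def]

lemma integral_coord_nu (hK : Good d K) (hKv : ∀ t x v, K (t, x, v) = K (t, x, 0)) (t : ℝ)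
    (i : Fin d) :
    ∫ z : (Fin d → ℝ) × (Fin d → ℝ), K (t, z.1, z.2) * z.2 i ∂(nu d) = 0 := by
  have := ibp_nu hK hKv (Good.const d 1) t i
  simpa using this

lemma avg_lower (hF : Good d F) {c : ℝ} (hc : ∀ q, c ≤ F q) (q : Ph d) : c ≤ avg d F q := by
  have := integral_mono (integrable_const c) (hF.intg_gm q.1 q.2.1) (fun u => hc _)
  simpa [avg] using this

namespace KinFlow
variable {lam : ℝ} {H : Ph d → ℝ} {A B : Fin d → Ph d → ℝ}

lemma Lag_avg (hK : KinFlow d lam H A B) (q : Ph d) :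
    Lag d (avg d H) q = avg d (fun q => fderiv ℝ H q (1, 0, 0)) q
      + ∑ i, q.2.2 i * avg d (A i) q := by
  rw [Lag_eq_sum, fderiv_avg_apply hK.gH]
  congr 1
  refine Finset.sum_congr rfl fun i _ => ?_
  rw [fderiv_avg_apply hK.gH]
  unfold avg
  simp_rw [hK.eA]

/-- The time derivative of `∫ (Πh)^p` is `p(p-1) ∫ (Πh)^{p-2} ∇_x Πh · ∇_v h`. Writing `∫ (Πh)^p = ∫ (Πh)^{p-1} h`, both sides are
differentiated along free transport; the time derivative of `Πh` is eliminated between the two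
expressions. -/
lemma entropy_deriv (hK : KinFlow d lam H A B) (p : ℝ) (t : ℝ) (ht : 0 ≤ t) :
    HasDerivAt (fun t => ∫ z : (Fin d → ℝ) × (Fin d → ℝ), avg d H (t, z.1, z.2) ^ p ∂(nu d))
      (p * (p - 1) * ∑ i, ∫ z : (Fin d → ℝ) × (Fin d → ℝ), (avg d H (t, z.1, z.2) ^ (p - 2)
        * avg d (A i) (t, z.1, z.2)) * B i (t, z.1, z.2) ∂(nu d)) t := by
  obtain ⟨c, hc, hcH⟩ := hK.lo
  have hcP := avg_lower hK.gH hcH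
  have gP := hK.gH.avg
  have gPr : ∀ r : ℝ, Good d (fun q => avg d H q ^ r) := gP.rpow hc hcP
  have hP0 : ∀ q, 0 < avg d H q := fun q => hc.trans_le (hcP q)
  set T : Ph d → ℝ := avg d (fun q => fderiv ℝ H q (1, 0, 0)) with hT
  have gT : Good d T := hK.gT.avg
  have gG : ∀ i, Good d (avg d (A i)) := fun i => (hK.gA i).avg
  set X := ∫ z : (Fin d → ℝ) × (Fin d → ℝ),
    avg d H (t, z.1, z.2) ^ (p - 1) * T (t, z.1, z.2) ∂(nu d) with hX
  set S := ∑ i, ∫ z : (Fin d → ℝ) × (Fin d → ℝ), (avg d H (t, z.1, z.2) ^ (p - 2)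
        * avg d (A i) (t, z.1, z.2)) * B i (t, z.1, z.2) ∂(nu d) with hS
  have D1 := hasDerivAt_integral (gPr p) t
  have E1 : ∫ z : (Fin d → ℝ) × (Fin d → ℝ), Lag d (fun q => avg d H q ^ p) (t, z.1, z.2) ∂(nu d)
      = p * X := by
    have e : ∀ z : (Fin d → ℝ) × (Fin d → ℝ), Lag d (fun q => avg d H q ^ p) (t, z.1, z.2)
        = p * (avg d H (t, z.1, z.2) ^ (p - 1) * T (t, z.1, z.2))
          + ∑ i, p * ((avg d H (t, z.1, z.2) ^ (p - 1) * avg d (A i) (t, z.1, z.2)) * z.2 i) := by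
      intro z
      rw [Lag_rpow gP (hP0 _).ne', hK.Lag_avg, mul_add, Finset.mul_sum]
      congr 1
      · ring
      · exact Finset.sum_congr rfl fun i _ => by ring
    have gi : ∀ i, Integrable (fun z : (Fin d → ℝ) × (Fin d → ℝ) =>
        p * ((avg d H (t, z.1, z.2) ^ (p - 1) * avg d (A i) (t, z.1, z.2)) * z.2 i)) (nu d) :=
      fun i => by
        have := integrable_coord_mul ((gPr (p - 1)).mul (gG i)) (Good.const d 1) t i
        simp only [mul_one] at this
        exact this.const_mul p
    simp_rw [e]
    rw [integral_add ((((gPr (p - 1)).mul gT).intg t).const_mul p)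
      (integrable_finsetSum _ fun i _ => gi i), integral_finsetSum _ fun i _ => gi i,
      integral_const_mul]
    have z0 : ∀ i, ∫ z : (Fin d → ℝ) × (Fin d → ℝ),
        p * ((avg d H (t, z.1, z.2) ^ (p - 1) * avg d (A i) (t, z.1, z.2)) * z.2 i) ∂(nu d) = 0 :=
      fun i => by
        rw [integral_const_mul,
          integral_coord_nu ((gPr (p - 1)).mul (gG i)) (fun _ _ _ => rfl) t i, mul_zero]
    simp [z0, hX]
  have D2 := hasDerivAt_integral ((gPr (p - 1)).mul hK.gH) t
  have E2 : ∫ z : (Fin d → ℝ) × (Fin d → ℝ),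
      Lag d (fun q => avg d H q ^ (p - 1) * H q) (t, z.1, z.2) ∂(nu d)
      = (p - 1) * X + (p - 1) * S := by
    have e : ∀ z : (Fin d → ℝ) × (Fin d → ℝ),
        Lag d (fun q => avg d H q ^ (p - 1) * H q) (t, z.1, z.2)
        = (lam * (avg d H (t, z.1, z.2) ^ (p - 1) * avg d H (t, z.1, z.2))
            - lam * (avg d H (t, z.1, z.2) ^ (p - 1) * H (t, z.1, z.2)))
          + ((p - 1) * ((avg d H (t, z.1, z.2) ^ (p - 2) * T (t, z.1, z.2)) * H (t, z.1, z.2))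
          + ∑ i, (p - 1) * ((avg d H (t, z.1, z.2) ^ (p - 2) * avg d (A i) (t, z.1, z.2))
              * (z.2 i * H (t, z.1, z.2)))) := by
      intro z
      rw [Lag_mul (gPr (p - 1)) hK.gH, Lag_rpow gP (hP0 _).ne', hK.Lag_avg, hK.LH _ ht,
        show p - 1 - 1 = p - 2 by ring, mul_add, mul_add, Finset.mul_sum, Finset.mul_sum]
      congr 1
      · ring
      · congr 1
        · ring
        · exact Finset.sum_congr rfl fun i _ => by ring
    have gi : ∀ i, Integrable (fun z : (Fin d → ℝ) × (Fin d → ℝ) =>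
        (p - 1) * ((avg d H (t, z.1, z.2) ^ (p - 2) * avg d (A i) (t, z.1, z.2))
              * (z.2 i * H (t, z.1, z.2)))) (nu d) :=
      fun i => (integrable_coord_mul ((gPr (p - 2)).mul (gG i)) hK.gH t i).const_mul _
    simp_rw [e]
    have j1 := (((gPr (p - 1)).mul gP).intg t).const_mul lam
    have j2 := (((gPr (p - 1)).mul hK.gH).intg t).const_mul lam
    have j3 := ((((gPr (p - 2)).mul gT).mul hK.gH).intg t).const_mul (p - 1)
    have j4 := integrable_finsetSum Finset.univ fun i _ => gi i
    refine (integral_add (j1.sub j2) (j3.add j4)).trans ?_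
    simp only [Pi.sub_apply, Pi.add_apply]
    rw [integral_sub j1 j2, integral_add j3 j4,
      integral_finsetSum _ fun i _ => gi i]
    simp_rw [integral_const_mul]
    rw [integral_mul_avg (gPr (p - 1)) (fun _ _ _ => rfl) hK.gH t,
      integral_mul_avg ((gPr (p - 2)).mul gT) (fun _ _ _ => rfl) hK.gH t, sub_self, zero_add,
      ← Finset.mul_sum]
    congr 2
    · rw [hX]
      refine integral_congr_ae (ae_of_all _ fun z => ?_)
      have : avg d H (t, z.1, z.2) ^ (p - 1)
          = avg d H (t, z.1, z.2) ^ (p - 2) * avg d H (t, z.1, z.2) := by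
        rw [← rpow_add_one (hP0 _).ne']; ring_nf
      simp only [this]; ring
    · rw [hS]
      refine Finset.sum_congr rfl fun i _ => ?_
      rw [ibp_nu ((gPr (p - 2)).mul (gG i)) (fun _ _ _ => rfl) hK.gH t i]
      simp_rw [hK.eB]
  have e12 : (fun t => ∫ z : (Fin d → ℝ) × (Fin d → ℝ), avg d H (t, z.1, z.2) ^ p ∂(nu d))
      = fun t => ∫ z : (Fin d → ℝ) × (Fin d → ℝ),
          avg d H (t, z.1, z.2) ^ (p - 1) * H (t, z.1, z.2) ∂(nu d) := by
    funext s
    rw [integral_mul_avg (gPr (p - 1)) (fun _ _ _ => rfl) hK.gH s]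
    refine integral_congr_ae (ae_of_all _ fun z => ?_)
    simp only
    rw [← rpow_add_one (hP0 _).ne']; ring_nf
  rw [← e12, E2] at D2
  rw [E1] at D1
  have hu := D1.unique D2
  have hXS : X = (p - 1) * S := by linarith
  rw [hXS] at D1
  rwa [mul_assoc]

end KinFlow
end

/-! ### The modified Fisher information -/

section

/-- Comparison of the weights `h^{-s}` and `g^{-s}`, which comes from the concavity bounds
`y^s ≤ sy + 1 - s` and `y^{-s} ≤ s/y + 1 - s` at `y = h/g`. -/
lemma weight_ineq {s h g : ℝ} (hs0 : 0 ≤ s) (hs1 : s ≤ 1) (hh : 0 < h) (hg : 0 < g) :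
    (h ^ (-s) + g ^ (-s)) ^ 2
      ≤ h ^ (-s) * g ^ (-s) * (2 - s + s * (g / h)) * (2 - s + s * (h / g)) := by
  have hy : 0 < h / g := div_pos hh hg
  set y := h / g with hyd
  have hinv : g / h = y⁻¹ := by rw [hyd, inv_div]
  have hr : 0 < y ^ s := rpow_pos_of_pos hy s
  have hW : 0 < h ^ (-s) := rpow_pos_of_pos hh _
  have hQ : g ^ (-s) = y ^ s * h ^ (-s) := by
    rw [hyd, div_rpow hh.le hg.le, rpow_neg hg.le, rpow_neg hh.le]
    have := (rpow_pos_of_pos hh s).ne'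
    field_simp
  have amgm : ∀ z : ℝ, 0 < z → z ^ s ≤ s * z + (1 - s) := fun z hz => by
    have := Real.geom_mean_le_arith_mean2_weighted hs0 (by linarith : 0 ≤ 1 - s) hz.le
      zero_le_one (by ring)
    simpa using this
  have a1 := amgm y hy
  have a2 := amgm y⁻¹ (inv_pos.2 hy)
  rw [inv_rpow hy.le] at a2
  rw [hQ, hinv]
  set r := y ^ s with hrd
  set W := h ^ (-s)
  have hyi : y * y⁻¹ = 1 := mul_inv_cancel₀ hy.ne'
  have hri : r * r⁻¹ = 1 := mul_inv_cancel₀ hr.ne'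
  have key : r + r⁻¹ + 2 ≤ (2 - s + s * y⁻¹) * (2 - s + s * y) := by
    have e : (2 - s + s * y⁻¹) * (2 - s + s * y)
        = (2 - s) ^ 2 + s ^ 2 + s * (2 - s) * (y + y⁻¹) := by linear_combination s ^ 2 * hyi
    have hyy : 2 ≤ y + y⁻¹ := by
      have : y + y⁻¹ - 2 = (y - 1) ^ 2 * y⁻¹ := by linear_combination (2 - y) * hyi
      have : 0 ≤ (y - 1) ^ 2 * y⁻¹ := by positivity
      linarith
    rw [e]
    nlinarith [mul_nonneg hs0 (by linarith : 0 ≤ 1 - s)]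
  have e2 : (W + r * W) ^ 2 = W * (r * W) * (r + r⁻¹ + 2) := by
    linear_combination (-W ^ 2) * hri
  rw [e2, mul_assoc (W * (r * W))]
  exact mul_le_mul_of_nonneg_left key (by positivity)

/-- The pointwise inequality behind the decay of the modified Fisher information, to be used with
`W = h^{p-2}`, `Q = (Πh)^{p-2}`, `a = ∂ᵢh` in position, `b = ∂ᵢh` in velocity, `g = Πa`,
`m = p + (2-p) Πh/h` and `M = p + (2-p) h/Πh`. For these values the last term on the right has mean
zero in velocity. -/
lemma pointwise_ineq {lam W Q m M a b g : ℝ} (hl : 0 < lam) (hW : 0 < W) (hm : 1 ≤ m)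
    (hWQ : (W + Q) ^ 2 ≤ W * Q * m * M) :
    16 * W * (2 * a * g - m * a ^ 2) + 2 * (-(W * a ^ 2) + lam * W * (g * b - m * a * b))
      + lam / 4 * (-2 * W * a * b - lam * m * W * b ^ 2) + 2 * lam * (Q * g * b)
    ≤ -(W * a ^ 2) - lam ^ 2 / 16 * (W * b ^ 2) - 16 * (2 * (Q * a * g) - Q * M * g ^ 2) := by
  have hWm : 0 < W * m := by positivity
  set Z := (W + Q) * g - m * W * a with hZ
  set Y := m * W * a ^ 2 - 2 * (W + Q) * a * g + M * Q * g ^ 2 with hY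
  have h1 : Z ^ 2 / (W * m) ≤ Y := by
    rw [div_le_iff₀ hWm]
    nlinarith [mul_le_mul_of_nonneg_right hWQ (sq_nonneg g)]
  have h2 : 2 * lam * (Z * b) ≤ 8 * (Z ^ 2 / (W * m)) + lam ^ 2 / 8 * (W * m * b ^ 2) := by
    have e : 8 * (Z ^ 2 / (W * m)) + lam ^ 2 / 8 * (W * m * b ^ 2) - 2 * lam * (Z * b)
        = 8 / (W * m) * (Z - lam * (W * m) * b / 8) ^ 2 := by field_simp; ring
    have : 0 ≤ 8 / (W * m) * (Z - lam * (W * m) * b / 8) ^ 2 := by positivity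
    linarith
  have h0 : 0 ≤ Z ^ 2 / (W * m) := by positivity
  have h3 : 0 ≤ W * (a + lam / 4 * b) ^ 2 := by positivity
  have h4 : 0 ≤ lam ^ 2 / 8 * (W * b ^ 2) * (m - 1) :=
    mul_nonneg (by positivity) (by linarith)
  nlinarith

end

namespace KinFlow
variable {d : ℕ} {lam : ℝ} {H : Ph d → ℝ} {A B : Fin d → Ph d → ℝ}

/-- Density of the modified Fisher information in one coordinate. The coefficients `16/λ`, `2`, `λ/4`
make the quadratic form positive definite and the cross terms absorbable in `pointwise_ineq`. -/
def _root_.modF (d : ℕ) (lam p : ℝ) (H : Ph d → ℝ) (A B : Fin d → Ph d → ℝ) (i : Fin d)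
    (q : Ph d) : ℝ :=
  H q ^ (p - 2) * (16 / lam * (A i q * A i q) + (2 * (A i q * B i q) + lam / 4 * (B i q * B i q)))

lemma good_quad (hK : KinFlow d lam H A B) (i : Fin d) (a b c : ℝ) :
    Good d (fun q => a * (A i q * A i q) + (b * (A i q * B i q) + c * (B i q * B i q))) :=
  (((hK.gA i).mul (hK.gA i)).const_mul a).add
    ((((hK.gA i).mul (hK.gB i)).const_mul b).add (((hK.gB i).mul (hK.gB i)).const_mul c))

lemma good_pow (hK : KinFlow d lam H A B) (r : ℝ) : Good d (fun q => H q ^ r) := by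
  obtain ⟨c, hc, hcH⟩ := hK.lo
  exact hK.gH.rpow hc hcH r

lemma good_avg_pow (hK : KinFlow d lam H A B) (r : ℝ) : Good d (fun q => avg d H q ^ r) := by
  obtain ⟨c, hc, hcH⟩ := hK.lo
  exact hK.gH.avg.rpow hc (avg_lower hK.gH hcH) r

lemma H_pos (hK : KinFlow d lam H A B) (q : Ph d) : 0 < H q := by
  obtain ⟨c, hc, hcH⟩ := hK.lo
  exact hc.trans_le (hcH q)

lemma avg_pos (hK : KinFlow d lam H A B) (q : Ph d) : 0 < avg d H q := by
  obtain ⟨c, hc, hcH⟩ := hK.lo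
  exact hc.trans_le (avg_lower hK.gH hcH q)

lemma good_modF (hK : KinFlow d lam H A B) (p : ℝ) (i : Fin d) : Good d (modF d lam p H A B i) :=
  (hK.good_pow (p - 2)).mul (hK.good_quad i _ _ _)

lemma Lag_modF (hK : KinFlow d lam H A B) (hl : 0 < lam) (p : ℝ) (i : Fin d) (q : Ph d)
    (hq : 0 ≤ q.1) :
    Lag d (modF d lam p H A B i) q =
      16 * H q ^ (p - 2) * (2 * A i q * avg d (A i) q
          - (2 - (2 - p) + (2 - p) * (avg d H q / H q)) * A i q ^ 2)
      + 2 * (-(H q ^ (p - 2) * A i q ^ 2) + lam * H q ^ (p - 2) * (avg d (A i) q * B i q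
          - (2 - (2 - p) + (2 - p) * (avg d H q / H q)) * A i q * B i q))
      + lam / 4 * (-2 * H q ^ (p - 2) * A i q * B i q
          - lam * (2 - (2 - p) + (2 - p) * (avg d H q / H q)) * H q ^ (p - 2) * B i q ^ 2) := by
  have hH := hK.H_pos q
  have gAA := (hK.gA i).mul (hK.gA i)
  have gAB := (hK.gA i).mul (hK.gB i)
  have gBB := (hK.gB i).mul (hK.gB i)
  have e0 : Lag d (fun q => H q ^ (p - 2)) q
      = (p - 2) * lam * H q ^ (p - 2) * (avg d H q / H q - 1) := by
    rw [Lag_rpow hK.gH hH.ne', hK.LH q hq, rpow_sub_one hH.ne']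
    field_simp
  unfold modF
  rw [Lag_mul (hK.good_pow (p - 2)) (hK.good_quad i _ _ _), e0,
    Lag_add (gAA.const_mul _) ((gAB.const_mul _).add (gBB.const_mul _)),
    Lag_add (gAB.const_mul _) (gBB.const_mul _), Lag_const_mul gAA, Lag_const_mul gAB,
    Lag_const_mul gBB, Lag_mul (hK.gA i) (hK.gA i), Lag_mul (hK.gA i) (hK.gB i),
    Lag_mul (hK.gB i) (hK.gB i), hK.LA i q hq, hK.LB i q hq]
  field_simp
  ring

/-- Differential inequality for one coordinate, integrated. -/
lemma coord_ineq (hK : KinFlow d lam H A B) (hl : 0 < lam) {p : ℝ} (hp1 : 1 < p) (hp2 : p ≤ 2)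
    (i : Fin d) {t : ℝ} (ht : 0 ≤ t) :
    ∫ z : (Fin d → ℝ) × (Fin d → ℝ), Lag d (modF d lam p H A B i) (t, z.1, z.2) ∂(nu d)
      + 2 * lam * ∫ z : (Fin d → ℝ) × (Fin d → ℝ), (avg d H (t, z.1, z.2) ^ (p - 2)
        * avg d (A i) (t, z.1, z.2)) * B i (t, z.1, z.2) ∂(nu d)
    ≤ - ∫ z : (Fin d → ℝ) × (Fin d → ℝ), H (t, z.1, z.2) ^ (p - 2) *
        (A i (t, z.1, z.2) ^ 2 + lam ^ 2 / 16 * B i (t, z.1, z.2) ^ 2) ∂(nu d) := by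
  have gA := hK.gA i
  have gB := hK.gB i
  have gG := gA.avg
  have gQ := hK.good_avg_pow (p - 2)
  have gW := hK.good_pow (p - 2)
  have gQ3 := hK.good_avg_pow (p - 3)
  have gL := Lag_intg (hK.good_modF p i) t
  have gE := (((gQ.mul gG).mul gB).intg t).const_mul (2 * lam)
  have gR : Integrable (fun z : (Fin d → ℝ) × (Fin d → ℝ) => H (t, z.1, z.2) ^ (p - 2) *
        (A i (t, z.1, z.2) ^ 2 + lam ^ 2 / 16 * B i (t, z.1, z.2) ^ 2)) (nu d) := by
    have := (gW.mul ((gA.mul gA).add ((gB.mul gB).const_mul (lam ^ 2 / 16)))).intg t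
    simpa only [← pow_two] using this
  have g1 := ((gQ.mul gG).mul gA).intg t
  have g2 := ((gQ.mul gG).mul gG).intg t
  have g3 := (((gQ3.mul gG).mul gG).mul hK.gH).intg t
  -- `z1` and `z2` make the last term of `pointwise_ineq` vanish after integration
  have z1 : ∫ z : (Fin d → ℝ) × (Fin d → ℝ), (avg d H (t, z.1, z.2) ^ (p - 2)
        * avg d (A i) (t, z.1, z.2)) * A i (t, z.1, z.2) ∂(nu d)
      = ∫ z : (Fin d → ℝ) × (Fin d → ℝ), (avg d H (t, z.1, z.2) ^ (p - 2)
        * avg d (A i) (t, z.1, z.2)) * avg d (A i) (t, z.1, z.2) ∂(nu d) :=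
    integral_mul_avg (gQ.mul gG) (fun _ _ _ => rfl) gA t
  have z2 : ∫ z : (Fin d → ℝ) × (Fin d → ℝ), ((avg d H (t, z.1, z.2) ^ (p - 3)
        * avg d (A i) (t, z.1, z.2)) * avg d (A i) (t, z.1, z.2)) * H (t, z.1, z.2) ∂(nu d)
      = ∫ z : (Fin d → ℝ) × (Fin d → ℝ), (avg d H (t, z.1, z.2) ^ (p - 2)
        * avg d (A i) (t, z.1, z.2)) * avg d (A i) (t, z.1, z.2) ∂(nu d) := by
    rw [integral_mul_avg ((gQ3.mul gG).mul gG) (fun _ _ _ => rfl) hK.gH t]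
    refine integral_congr_ae (ae_of_all _ fun z => ?_)
    have : avg d H (t, z.1, z.2) ^ (p - 2)
        = avg d H (t, z.1, z.2) ^ (p - 3) * avg d H (t, z.1, z.2) := by
      rw [← rpow_add_one (hK.avg_pos _).ne']; ring_nf
    simp only [this]; ring
  have hpt : ∀ z : (Fin d → ℝ) × (Fin d → ℝ),
      Lag d (modF d lam p H A B i) (t, z.1, z.2)
        + 2 * lam * ((avg d H (t, z.1, z.2) ^ (p - 2)
          * avg d (A i) (t, z.1, z.2)) * B i (t, z.1, z.2))
      ≤ -(H (t, z.1, z.2) ^ (p - 2) *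
          (A i (t, z.1, z.2) ^ 2 + lam ^ 2 / 16 * B i (t, z.1, z.2) ^ 2))
        + ((-32) * ((avg d H (t, z.1, z.2) ^ (p - 2)
          * avg d (A i) (t, z.1, z.2)) * A i (t, z.1, z.2))
        + (16 * p * ((avg d H (t, z.1, z.2) ^ (p - 2)
          * avg d (A i) (t, z.1, z.2)) * avg d (A i) (t, z.1, z.2))
        + 16 * (2 - p) * (((avg d H (t, z.1, z.2) ^ (p - 3)
        * avg d (A i) (t, z.1, z.2)) * avg d (A i) (t, z.1, z.2)) * H (t, z.1, z.2)))) := by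
    intro z
    set q : Ph d := (t, z.1, z.2)
    have hH := hK.H_pos q
    have hP := hK.avg_pos q
    have hw := weight_ineq (s := 2 - p) (by linarith) (by linarith) hH hP
    rw [show -(2 - p) = p - 2 by ring] at hw
    have hm : 1 ≤ 2 - (2 - p) + (2 - p) * (avg d H q / H q) := by
      have : 0 ≤ (2 - p) * (avg d H q / H q) := mul_nonneg (by linarith) (by positivity)
      linarith
    have := pointwise_ineq (a := A i q) (b := B i q) (g := avg d (A i) q) hl
      (rpow_pos_of_pos hH (p - 2)) hm hw
    rw [hK.Lag_modF hl p i q ht]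
    have e3 : avg d H q ^ (p - 3) * H q = avg d H q ^ (p - 2) * (H q / avg d H q) := by
      rw [show p - 3 = p - 2 - 1 by ring, rpow_sub_one hP.ne']
      field_simp
    have e4 : avg d H q ^ (p - 3) * avg d (A i) q * avg d (A i) q * H q
        = avg d H q ^ (p - 2) * (H q / avg d H q) * avg d (A i) q ^ 2 := by
      linear_combination (avg d (A i) q ^ 2) * e3
    rw [e4]
    linarith
  have hL := integral_mono (gL.add gE) (gR.neg.add ((g1.const_mul (-32)).add
    ((g2.const_mul (16 * p)).add (g3.const_mul (16 * (2 - p)))))) hpt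
  simp only [Pi.add_apply, Pi.neg_apply] at hL
  have s1 := integral_add gL gE
  rw [integral_const_mul] at s1
  have k3 := (g2.const_mul (16 * p)).add (g3.const_mul (16 * (2 - p)))
  have k2 := (g1.const_mul (-32)).add k3
  have s2 := integral_add gR.neg k2
  have s3 := integral_add (g1.const_mul (-32)) k3
  have s4 := integral_add (g2.const_mul (16 * p)) (g3.const_mul (16 * (2 - p)))
  simp only [Pi.add_apply, Pi.neg_apply, integral_const_mul, integral_neg] at s2 s3 s4
  rw [z1] at s3
  rw [z2] at s4
  linarith

/-- The modified functional: twisted Fisher information plus a multiple of `∫ (Πh)^p`. -/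
def _root_.lyap (d : ℕ) (lam p : ℝ) (H : Ph d → ℝ) (A B : Fin d → Ph d → ℝ) (t : ℝ) : ℝ :=
  ∫ z : (Fin d → ℝ) × (Fin d → ℝ), ∑ i, modF d lam p H A B i (t, z.1, z.2) ∂(nu d)
    + 2 * lam / (p * (p - 1)) *
      ∫ z : (Fin d → ℝ) × (Fin d → ℝ), avg d H (t, z.1, z.2) ^ p ∂(nu d)

/-- Dissipation inequality for the modified functional. -/
lemma lyap_deriv (hK : KinFlow d lam H A B) (hl : 0 < lam) {p : ℝ} (hp1 : 1 < p) (hp2 : p ≤ 2)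
    {t : ℝ} (ht : 0 ≤ t) :
    ∃ E', HasDerivAt (lyap d lam p H A B) E' t ∧
      E' ≤ - ∫ z : (Fin d → ℝ) × (Fin d → ℝ), H (t, z.1, z.2) ^ (p - 2) *
        (∑ i, A i (t, z.1, z.2) ^ 2 + lam ^ 2 / 16 * ∑ i, B i (t, z.1, z.2) ^ 2) ∂(nu d) := by
  have hg : Good d (fun q => ∑ i, modF d lam p H A B i q) :=
    Good.sum Finset.univ fun i => hK.good_modF p i
  have D := (hasDerivAt_integral hg t).add
    ((hK.entropy_deriv p t ht).const_mul (2 * lam / (p * (p - 1))))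
  refine ⟨_, D, ?_⟩
  simp_rw [Lag_sum fun i => hK.good_modF p i]
  rw [integral_finsetSum _ fun i _ => Lag_intg (hK.good_modF p i) t]
  have hp0 : p ≠ 0 := by linarith
  have hp10 : p - 1 ≠ 0 := by linarith
  rw [← mul_assoc, div_mul_cancel₀ _ (mul_ne_zero hp0 hp10), Finset.mul_sum,
    ← Finset.sum_add_distrib]
  have e : ∀ z : (Fin d → ℝ) × (Fin d → ℝ), H (t, z.1, z.2) ^ (p - 2) *
        (∑ i, A i (t, z.1, z.2) ^ 2 + lam ^ 2 / 16 * ∑ i, B i (t, z.1, z.2) ^ 2)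
      = ∑ i, H (t, z.1, z.2) ^ (p - 2) *
        (A i (t, z.1, z.2) ^ 2 + lam ^ 2 / 16 * B i (t, z.1, z.2) ^ 2) := fun z => by
    rw [← Finset.mul_sum, Finset.sum_add_distrib, Finset.mul_sum]
  simp_rw [e]
  rw [integral_finsetSum, ← Finset.sum_neg_distrib]
  · exact Finset.sum_le_sum fun i _ => hK.coord_ineq hl hp1 hp2 i ht
  · intro i _
    have := ((hK.good_pow (p - 2)).mul (((hK.gA i).mul (hK.gA i)).add
      (((hK.gB i).mul (hK.gB i)).const_mul (lam ^ 2 / 16)))).intg t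
    simpa only [← pow_two] using this

end KinFlow

/-! ### Beckner inequality and exponential decay -/

/-- The `p`-Fisher information at time `t`, in terms of the partial derivatives `A`, `B` of `H`. -/
def fish (d : ℕ) (p : ℝ) (H : Ph d → ℝ) (A B : Fin d → Ph d → ℝ) (t : ℝ) : ℝ :=
  ∫ z : (Fin d → ℝ) × (Fin d → ℝ), H (t, z.1, z.2) ^ (p - 2) *
    (∑ i, A i (t, z.1, z.2) ^ 2 + ∑ i, B i (t, z.1, z.2) ^ 2) ∂(nu d)

/-- The constant in the Beckner inequality `H^{(p)} ≤ C I^{(p)}`. -/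
def beck (d : ℕ) (p : ℝ) : ℝ := poinc d * p / (4 * (p - 1))

lemma bernoulli_rpow {p y : ℝ} (hp : 1 ≤ p) (hy : 0 ≤ y) : 1 + p * (y - 1) ≤ y ^ p := by
  have := one_add_mul_self_le_rpow_one_add (s := y - 1) (by linarith) hp
  simpa using this

namespace KinFlow
variable {d : ℕ} {lam : ℝ} {H : Ph d → ℝ} {A B : Fin d → Ph d → ℝ}

lemma good_wquad (hK : KinFlow d lam H A B) (p a b : ℝ) :
    Good d (fun q => H q ^ (p - 2) * (a * ∑ i, A i q ^ 2 + b * ∑ i, B i q ^ 2)) := by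
  simp only [pow_two]
  exact (hK.good_pow (p - 2)).mul
    (((Good.sum Finset.univ fun i => (hK.gA i).mul (hK.gA i)).const_mul a).add
      ((Good.sum Finset.univ fun i => (hK.gB i).mul (hK.gB i)).const_mul b))

lemma fish_intg (hK : KinFlow d lam H A B) (p t : ℝ) :
    Integrable (fun z : (Fin d → ℝ) × (Fin d → ℝ) => H (t, z.1, z.2) ^ (p - 2) *
      (∑ i, A i (t, z.1, z.2) ^ 2 + ∑ i, B i (t, z.1, z.2) ^ 2)) (nu d) := by
  simpa only [one_mul] using (hK.good_wquad p 1 1).intg t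

lemma fish_nonneg (hK : KinFlow d lam H A B) (p t : ℝ) : 0 ≤ fish d p H A B t :=
  integral_nonneg fun z => mul_nonneg (rpow_pos_of_pos (hK.H_pos _) _).le (by positivity)

lemma avg_mass (hK : KinFlow d lam H A B) {t : ℝ} (ht : 0 ≤ t) :
    ∫ z : (Fin d → ℝ) × (Fin d → ℝ), avg d H (t, z.1, z.2) ∂(nu d) = 1 := by
  have := integral_mul_avg (Good.const d 1) (fun _ _ _ => rfl) hK.gH t
  simp only [one_mul] at this
  rw [← this, hK.mass t ht]

/-- Jensen: the projected entropy is nonnegative. -/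
lemma one_le_avg_pow (hK : KinFlow d lam H A B) {p : ℝ} (hp : 1 ≤ p) {t : ℝ} (ht : 0 ≤ t) :
    1 ≤ ∫ z : (Fin d → ℝ) × (Fin d → ℝ), avg d H (t, z.1, z.2) ^ p ∂(nu d) := by
  have i1 := hK.gH.avg.intg t
  have i2 : Integrable (fun z : (Fin d → ℝ) × (Fin d → ℝ) => avg d H (t, z.1, z.2) - 1) (nu d) :=
    i1.sub (integrable_const 1)
  have h := integral_mono ((integrable_const (1:ℝ)).add (i2.const_mul p))
    ((hK.good_avg_pow p).intg t) (fun z => bernoulli_rpow hp (hK.avg_pos (t, z.1, z.2)).le)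
  simp only [Pi.add_apply] at h
  rw [integral_add (integrable_const _) (i2.const_mul p), integral_const_mul,
    integral_sub i1 (integrable_const 1), hK.avg_mass ht] at h
  simpa using h

/-- Jensen: the projected entropy is at most the full entropy. -/
lemma avg_pow_le (hK : KinFlow d lam H A B) {p : ℝ} (hp : 1 ≤ p) (t : ℝ) :
    ∫ z : (Fin d → ℝ) × (Fin d → ℝ), avg d H (t, z.1, z.2) ^ p ∂(nu d)
      ≤ ∫ z : (Fin d → ℝ) × (Fin d → ℝ), H (t, z.1, z.2) ^ p ∂(nu d) := by
  have i0 := (hK.good_avg_pow p).intg t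
  have i1 := ((hK.good_avg_pow (p - 1)).mul hK.gH).intg t
  have i2 := ((hK.good_avg_pow (p - 1)).mul hK.gH.avg).intg t
  have i3 : Integrable (fun z : (Fin d → ℝ) × (Fin d → ℝ) =>
      avg d H (t, z.1, z.2) ^ (p - 1) * H (t, z.1, z.2)
        - avg d H (t, z.1, z.2) ^ (p - 1) * avg d H (t, z.1, z.2)) (nu d) := i1.sub i2
  have h := integral_mono (i0.add (i3.const_mul p)) ((hK.good_pow p).intg t) (fun z => ?_)
  · simp only [Pi.add_apply] at h
    rw [integral_add i0 (i3.const_mul p), integral_const_mul, integral_sub i1 i2,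
      integral_mul_avg (hK.good_avg_pow (p - 1)) (fun _ _ _ => rfl) hK.gH t] at h
    simpa using h
  · simp only [Pi.add_apply]
    set q : Ph d := (t, z.1, z.2)
    have hP := hK.avg_pos q
    have hH := hK.H_pos q
    have hb := mul_le_mul_of_nonneg_left (bernoulli_rpow hp (div_pos hH hP).le)
      (rpow_pos_of_pos hP p).le
    rw [div_rpow hH.le hP.le, mul_div_cancel₀ _ (rpow_pos_of_pos hP p).ne'] at hb
    have e : avg d H q ^ p * (1 + p * (H q / avg d H q - 1))
        = avg d H q ^ p + p * (avg d H q ^ (p - 1) * H q - avg d H q ^ (p - 1) * avg d H q) := by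
      rw [rpow_sub_one hP.ne']; field_simp
    rw [e] at hb
    exact hb

/-- Beckner's inequality, from the Poincaré inequality applied to `h^{p/2}`. -/
lemma beckner (hK : KinFlow d lam H A B) {p : ℝ} (hp1 : 1 < p) (hp2 : p ≤ 2) {t : ℝ} (ht : 0 ≤ t) :
    (∫ z : (Fin d → ℝ) × (Fin d → ℝ), H (t, z.1, z.2) ^ p ∂(nu d) - 1) / (p * (p - 1))
      ≤ beck d p * fish d p H A B t := by
  have gf := hK.good_pow (p / 2)
  obtain ⟨C, hC⟩ := gf.bd
  have hC0 : 0 ≤ C := (abs_nonneg _).trans (hC 0).1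
  have hpoi := nu_poincare d (fun z => H (t, z.1, z.2) ^ (p / 2))
    (gf.cd.comp (g := fun q : Ph d => H q ^ (p / 2))
      (f := fun z : (Fin d → ℝ) × (Fin d → ℝ) => ((t, z.1, z.2) : Ph d)) (by fun_prop))
    (fun x v k => gf.per t x v k) C (fun z => (hC _).1) (fun z => by
      have := ((gf.diff (t, z)).hasFDerivAt.comp z (hasFDerivAt_prodMk_right t z)).fderiv
      change ‖fderiv ℝ ((fun q : Ph d => H q ^ (p / 2)) ∘ fun y => (t, y)) z‖ ≤ C
      rw [this]
      refine (ContinuousLinearMap.opNorm_comp_le _ _).trans ?_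
      exact (mul_le_mul (hC _).2 (ContinuousLinearMap.norm_inr_le_one ℝ _ _)
        (norm_nonneg _) hC0).trans (by simp))
  have e1 : ∀ z : (Fin d → ℝ) × (Fin d → ℝ),
      (H (t, z.1, z.2) ^ (p / 2)) ^ 2 = H (t, z.1, z.2) ^ p := fun z => by
    rw [← rpow_natCast, ← rpow_mul (hK.H_pos _).le]; norm_num
  have hw : ∀ q : Ph d, (p / 2 * H q ^ (p / 2 - 1)) ^ 2 = p ^ 2 / 4 * H q ^ (p - 2) := fun q => by
    rw [mul_pow, ← rpow_natCast (H q ^ (p / 2 - 1)), ← rpow_mul (hK.H_pos _).le]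
    push_cast
    rw [show (p / 2 - 1) * 2 = p - 2 by ring]; ring
  have hfd : ∀ q w : Ph d, fderiv ℝ (fun q : Ph d => H q ^ (p / 2)) q w
      = p / 2 * H q ^ (p / 2 - 1) * fderiv ℝ H q w := fun q w => by
    rw [((hK.gH.diff q).hasFDerivAt.rpow_const (Or.inl (hK.H_pos q).ne')).fderiv]
    simp
  have e2 : ∀ z : (Fin d → ℝ) × (Fin d → ℝ),
      nsq d (gradx d (fun x v => H (t, x, v) ^ (p / 2)) z.1 z.2)
        + nsq d (gradv d (fun x v => H (t, x, v) ^ (p / 2)) z.1 z.2)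
      = p ^ 2 / 4 * (H (t, z.1, z.2) ^ (p - 2) *
        (∑ i, A i (t, z.1, z.2) ^ 2 + ∑ i, B i (t, z.1, z.2) ^ 2)) := fun z => by
    unfold nsq
    simp_rw [gradx_eq gf.diff, gradv_eq gf.diff, hfd, mul_pow _ (fderiv ℝ H _ _), hw,
      ← Finset.mul_sum, ← hK.eA, ← hK.eB]
    ring
  simp only [e1, e2, integral_const_mul] at hpoi
  change _ ≤ poinc d * (p ^ 2 / 4 * fish d p H A B t) at hpoi
  -- concavity of `y ↦ y^{p/2}`
  have hle : ∫ z : (Fin d → ℝ) × (Fin d → ℝ), H (t, z.1, z.2) ^ (p / 2) ∂(nu d) ≤ 1 := by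
    have i1 := hK.gH.intg t
    have i2 : Integrable (fun z : (Fin d → ℝ) × (Fin d → ℝ) =>
        p / 2 * H (t, z.1, z.2) + (1 - p / 2)) (nu d) :=
      (i1.const_mul _).add (integrable_const _)
    have h := integral_mono (gf.intg t) i2 (fun z => by
      have := Real.geom_mean_le_arith_mean2_weighted (by linarith : 0 ≤ p / 2)
        (by linarith : 0 ≤ 1 - p / 2) (hK.H_pos (t, z.1, z.2)).le zero_le_one (by ring)
      simpa using this)
    rw [integral_add (i1.const_mul _) (integrable_const _), integral_const_mul,
      hK.mass t ht] at h
    simpa using h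
  have hge : 0 ≤ ∫ z : (Fin d → ℝ) × (Fin d → ℝ), H (t, z.1, z.2) ^ (p / 2) ∂(nu d) :=
    integral_nonneg fun z => (rpow_pos_of_pos (hK.H_pos _) _).le
  have hsq : (∫ z : (Fin d → ℝ) × (Fin d → ℝ), H (t, z.1, z.2) ^ (p / 2) ∂(nu d)) ^ 2 ≤ 1 :=
    pow_le_one₀ hge hle
  have hp0 : 0 < p := by linarith
  have hp10 : 0 < p - 1 := by linarith
  rw [div_le_iff₀ (by positivity)]
  have e3 : beck d p * fish d p H A B t * (p * (p - 1))
      = poinc d * (p ^ 2 / 4 * fish d p H A B t) := by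
    unfold beck; field_simp
  rw [e3]; linarith

/-- The modified Fisher information is comparable to the `p`-Fisher information. -/
lemma modF_bounds (hK : KinFlow d lam H A B) (hl : 0 < lam) (p : ℝ) (t : ℝ) :
    min (8 / lam) (lam / 8) * fish d p H A B t
      ≤ ∫ z : (Fin d → ℝ) × (Fin d → ℝ), ∑ i, modF d lam p H A B i (t, z.1, z.2) ∂(nu d) ∧
    ∫ z : (Fin d → ℝ) × (Fin d → ℝ), ∑ i, modF d lam p H A B i (t, z.1, z.2) ∂(nu d)
      ≤ (16 / lam + 1 + lam / 4) * fish d p H A B t := by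
  have hg := (Good.sum Finset.univ fun i => hK.good_modF p i).intg t
  have hf := hK.fish_intg p t
  have e : ∀ (κ : ℝ) (z : (Fin d → ℝ) × (Fin d → ℝ)), κ * (H (t, z.1, z.2) ^ (p - 2) *
      (∑ i, A i (t, z.1, z.2) ^ 2 + ∑ i, B i (t, z.1, z.2) ^ 2))
      = ∑ i, H (t, z.1, z.2) ^ (p - 2) *
        (κ * (A i (t, z.1, z.2) ^ 2 + B i (t, z.1, z.2) ^ 2)) := fun κ z => by
    rw [← Finset.mul_sum, ← Finset.mul_sum, Finset.sum_add_distrib]; ring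
  have hli : lam * lam⁻¹ = 1 := mul_inv_cancel₀ hl.ne'
  have hli0 : 0 < lam⁻¹ := inv_pos.2 hl
  unfold fish
  constructor
  · rw [← integral_const_mul]
    refine integral_mono (hf.const_mul _) hg fun z => ?_
    simp only [e]
    refine Finset.sum_le_sum fun i _ => ?_
    refine mul_le_mul_of_nonneg_left ?_ (rpow_pos_of_pos (hK.H_pos _) _).le
    set a := A i (t, z.1, z.2)
    set b := B i (t, z.1, z.2)
    have h1 := mul_le_mul_of_nonneg_right (min_le_left (8 / lam) (lam / 8)) (sq_nonneg a)
    have h2 := mul_le_mul_of_nonneg_right (min_le_right (8 / lam) (lam / 8)) (sq_nonneg b)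
    have h3 : 0 ≤ 8 / lam * (a + lam / 8 * b) ^ 2 := by positivity
    have h4 : 8 / lam * (a + lam / 8 * b) ^ 2 = 8 / lam * a ^ 2 + 2 * (a * b) + lam / 8 * b ^ 2 := by
      field_simp; ring
    have h5 : 16 / lam = 2 * (8 / lam) := by ring
    rw [h5]
    nlinarith
  · rw [← integral_const_mul]
    refine integral_mono hg (hf.const_mul _) fun z => ?_
    simp only [e]
    refine Finset.sum_le_sum fun i _ => ?_
    refine mul_le_mul_of_nonneg_left ?_ (rpow_pos_of_pos (hK.H_pos _) _).le
    set a := A i (t, z.1, z.2)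
    set b := B i (t, z.1, z.2)
    have h1 : 0 ≤ 16 / lam * b ^ 2 := by positivity
    have h2 : 0 ≤ lam / 4 * a ^ 2 := by positivity
    nlinarith [sq_nonneg (a - b)]

/-- Exponential decay of the functional, by Grönwall. The subtracted constant turns the term in
`∫ (Πh)^p` into `2λ H_Π^{(p)}`. -/
lemma lyap_decay (hK : KinFlow d lam H A B) (hl : 0 < lam) {p : ℝ} (hp1 : 1 < p) (hp2 : p ≤ 2)
    {Lam : ℝ} (hLam : 0 < Lam)
    (hL : Lam * (16 / lam + 1 + lam / 4 + 2 * lam * beck d p) ≤ min 1 (lam ^ 2 / 16))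
    {t : ℝ} (ht : 0 ≤ t) :
    lyap d lam p H A B t - 2 * lam / (p * (p - 1))
      ≤ exp (-Lam * t) * (lyap d lam p H A B 0 - 2 * lam / (p * (p - 1))) := by
  have hp0 : 0 < p := by linarith
  have hp10 : 0 < p - 1 := by linarith
  set c0 := 2 * lam / (p * (p - 1)) with hc0
  have hc0pos : 0 < c0 := by positivity
  have hup : ∀ s, 0 ≤ s → lyap d lam p H A B s - c0
      ≤ (16 / lam + 1 + lam / 4 + 2 * lam * beck d p) * fish d p H A B s := by
    intro s hs
    have h1 := (hK.modF_bounds hl p s).2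
    have h2 := hK.avg_pow_le hp1.le s
    have h3 := hK.beckner hp1 hp2 hs
    have h4 : c0 * (∫ z : (Fin d → ℝ) × (Fin d → ℝ), H (s, z.1, z.2) ^ p ∂(nu d) - 1)
        = 2 * lam * ((∫ z : (Fin d → ℝ) × (Fin d → ℝ), H (s, z.1, z.2) ^ p ∂(nu d) - 1)
          / (p * (p - 1))) := by rw [hc0]; ring
    have h5 := mul_le_mul_of_nonneg_left h3 (by positivity : 0 ≤ 2 * lam)
    have h6 := mul_le_mul_of_nonneg_left h2 hc0pos.le
    unfold lyap
    rw [← hc0]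
    nlinarith
  have hdiss : ∀ s, 0 ≤ s → ∃ E', HasDerivAt (lyap d lam p H A B) E' s ∧
      E' + Lam * (lyap d lam p H A B s - c0) ≤ 0 := by
    intro s hs
    obtain ⟨E', hE, hle⟩ := hK.lyap_deriv hl hp1 hp2 hs
    refine ⟨E', hE, ?_⟩
    have h1 : min 1 (lam ^ 2 / 16) * fish d p H A B s
        ≤ ∫ z : (Fin d → ℝ) × (Fin d → ℝ), H (s, z.1, z.2) ^ (p - 2) *
        (∑ i, A i (s, z.1, z.2) ^ 2 + lam ^ 2 / 16 * ∑ i, B i (s, z.1, z.2) ^ 2) ∂(nu d) := by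
      unfold fish
      rw [← integral_const_mul]
      refine integral_mono ((hK.fish_intg p s).const_mul _)
        (by simpa only [one_mul] using (hK.good_wquad p 1 (lam ^ 2 / 16)).intg s) fun z => ?_
      have hW := (rpow_pos_of_pos (hK.H_pos (s, z.1, z.2)) (p - 2)).le
      have a1 : 0 ≤ ∑ i, A i (s, z.1, z.2) ^ 2 := by positivity
      have b1 : 0 ≤ ∑ i, B i (s, z.1, z.2) ^ 2 := by positivity
      have := mul_le_mul_of_nonneg_left (add_le_add
        (mul_le_mul_of_nonneg_right (min_le_left 1 (lam ^ 2 / 16)) a1)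
        (mul_le_mul_of_nonneg_right (min_le_right 1 (lam ^ 2 / 16)) b1)) hW
      simp only
      linarith
    have h2 := mul_le_mul_of_nonneg_left (hup s hs) hLam.le
    have h3 := mul_le_mul_of_nonneg_right hL (hK.fish_nonneg p s)
    nlinarith
  -- `e^{Λ s} (E(s) - c₀)` is nonincreasing
  have hanti : AntitoneOn (fun s => exp (Lam * s) * (lyap d lam p H A B s - c0)) (Set.Ici 0) := by
    have hder : ∀ s, 0 ≤ s → ∃ D, HasDerivAt
        (fun s => exp (Lam * s) * (lyap d lam p H A B s - c0)) D s ∧ D ≤ 0 := by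
      intro s hs
      obtain ⟨E', hE, hle⟩ := hdiss s hs
      have h1 : HasDerivAt (fun s => exp (Lam * s)) (exp (Lam * s) * Lam) s := by
        simpa using ((hasDerivAt_id s).const_mul Lam).exp
      refine ⟨_, h1.mul (hE.sub_const c0), ?_⟩
      have := mul_nonpos_of_nonneg_of_nonpos (exp_pos (Lam * s)).le hle
      linarith
    refine antitoneOn_of_deriv_nonpos (convex_Ici 0) ?_ ?_ ?_
    · intro s hs
      obtain ⟨D, hD, -⟩ := hder s hs
      exact hD.continuousAt.continuousWithinAt
    · intro s hs
      rw [interior_Ici] at hs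
      obtain ⟨D, hD, -⟩ := hder s (le_of_lt hs)
      exact hD.differentiableAt.differentiableWithinAt
    · intro s hs
      rw [interior_Ici] at hs
      obtain ⟨D, hD, h0⟩ := hder s (le_of_lt hs)
      rw [hD.deriv]; exact h0
  have h := hanti (Set.mem_Ici.2 le_rfl) (Set.mem_Ici.2 ht) ht
  simp only [mul_zero, exp_zero, one_mul] at h
  have h2 := mul_le_mul_of_nonneg_left h (exp_pos (-Lam * t)).le
  rw [← mul_assoc, ← exp_add, show -Lam * t + Lam * t = 0 by ring, exp_zero, one_mul] at h2
  exact h2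

end KinFlow

section
variable {d : ℕ} {lam : ℝ} {h : ℝ → (Fin d → ℝ) → (Fin d → ℝ) → ℝ} {A B : Fin d → Ph d → ℝ}

lemma Ipfull_eq (hK : KinFlow d lam (fun q => h q.1 q.2.1 q.2.2) A B) (p t : ℝ) :
    Ipfull d p (h t) = fish d p (fun q => h q.1 q.2.1 q.2.2) A B t := by
  have e : ∀ x v, h t x v ^ (p - 2) * (nsq d (gradx d (h t) x v) + nsq d (gradv d (h t) x v))
      = h t x v ^ (p - 2) * (∑ i, A i (t, x, v) ^ 2 + ∑ i, B i (t, x, v) ^ 2) := fun x v => by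
    unfold nsq
    simp_rw [hK.eA, hK.eB, ← gradx_eq hK.gH.diff, ← gradv_eq hK.gH.diff]
  unfold Ipfull
  simp_rw [e]
  exact intMu_eq (F := fun x v => h t x v ^ (p - 2)
    * (∑ i, A i (t, x, v) ^ 2 + ∑ i, B i (t, x, v) ^ 2)) (hK.fish_intg p t)

lemma Hp_eq (hK : KinFlow d lam (fun q => h q.1 q.2.1 q.2.2) A B) (p : ℝ) {t : ℝ} (ht : 0 ≤ t) :
    Hp d p (h t)
      = (∫ z : (Fin d → ℝ) × (Fin d → ℝ), h t z.1 z.2 ^ p ∂(nu d) - 1) / (p * (p - 1)) := by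
  have i1 := (hK.good_pow p).intg t
  have i2 := hK.gH.intg t
  unfold Hp
  rw [intMu_eq ((i1.sub i2).div_const _), integral_div]
  congr 1
  have := integral_sub i1 i2
  rw [hK.mass t ht] at this
  exact this

lemma HpPi_eq (hK : KinFlow d lam (fun q => h q.1 q.2.1 q.2.2) A B) (p : ℝ) {t : ℝ} (ht : 0 ≤ t) :
    HpPi d p (h t) = (∫ z : (Fin d → ℝ) × (Fin d → ℝ),
      avg d (fun q => h q.1 q.2.1 q.2.2) (t, z.1, z.2) ^ p ∂(nu d) - 1) / (p * (p - 1)) := by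
  have i1 := (hK.good_avg_pow p).intg t
  have i2 := hK.gH.avg.intg t
  have := integral_sub i1 i2
  rw [hK.avg_mass ht] at this
  rw [← this]
  unfold HpPi
  rw [integral_div]
  congr 1
  simp_rw [avg_eq_proj]
  unfold nu
  rw [integral_fun_fst (fun x => proj d (h t) x ^ p - proj d (h t) x)]
  simp
end

end

/-- `p`-entropy hypocoercivity for the linear relaxation Boltzmann equation:
for `p ∈ (1,2]` there are positive constants `Λ, α, β, γ` (depending on `λ, p, d`) such that any
suitably regular normalized solution satisfies
`I^{(p)}(h_t) + β H_Π^{(p)}(h_t) ≤ e^{-Λt} (α I^{(p)}(h_0) + β H_Π^{(p)}(h_0))` and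
`H^{(p)}(h_t) ≤ γ e^{-Λt} I^{(p)}(h_0)`. -/
theorem linear_relaxation_p_entropy_hypocoercivity
    (d : ℕ) (hd : 1 ≤ d) (p : ℝ) (hp1 : 1 < p) (hp2 : p ≤ 2) (lam : ℝ) (hlam : 0 < lam) :
    ∃ Lam alpha beta gamma : ℝ, 0 < Lam ∧ 0 < alpha ∧ 0 < beta ∧ 0 < gamma ∧
      ∀ h : ℝ → (Fin d → ℝ) → (Fin d → ℝ) → ℝ,
        Regular d h →
        (∀ t, 0 ≤ t → intMu d (h t) = 1) →
        SolvesLRB d lam h →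
        ∀ t : ℝ, 0 ≤ t →
          Ipfull d p (h t) + beta * HpPi d p (h t)
              ≤ Real.exp (-Lam * t) * (alpha * Ipfull d p (h 0) + beta * HpPi d p (h 0)) ∧
          Hp d p (h t) ≤ gamma * Real.exp (-Lam * t) * Ipfull d p (h 0) := by
  classical
  have hdr : (1 : ℝ) ≤ d := by exact_mod_cast hd
  have hp0 : 0 < p := by linarith
  have hp10 : 0 < p - 1 := by linarith
  have hpoinc : 0 < poinc d := by
    have := gauss_const_nonneg d
    unfold poinc; linarith
  have hbeck : 0 < beck d p := by unfold beck; positivity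
  set κ := min (8 / lam) (lam / 8) with hκ
  have hκ0 : 0 < κ := lt_min (by positivity) (by positivity)
  set δ := min 1 (lam ^ 2 / 16) with hδ
  have hδ0 : 0 < δ := lt_min one_pos (by positivity)
  set K := 16 / lam + 1 + lam / 4 with hKd
  have hK0 : 0 < K := by positivity
  set CB := beck d p with hCB
  have hβ : 0 < 2 * lam / κ := by positivity
  have hα : 0 < K / κ := by positivity
  refine ⟨δ / (K + 2 * lam * CB), K / κ, 2 * lam / κ, CB * (K / κ + 2 * lam / κ * CB),
    by positivity, hα, hβ, by positivity, ?_⟩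
  intro h hR hmass hS t ht
  have hF := flow_of_regular hR hmass hS
  set Lam := δ / (K + 2 * lam * CB) with hLam
  have hLam0 : 0 < Lam := by positivity
  have hLK : Lam * (K + 2 * lam * CB) ≤ δ := (div_mul_cancel₀ _ (by positivity)).le
  have hdec := hF.lyap_decay hlam hp1 hp2 hLam0 hLK ht
  -- the functional, in terms of the projected entropy
  have hsplit : ∀ s, 0 ≤ s → lyap d lam p (fun q => h q.1 q.2.1 q.2.2) _ _ s
      - 2 * lam / (p * (p - 1))
      = ∫ z : (Fin d → ℝ) × (Fin d → ℝ), ∑ i, modF d lam p (fun q => h q.1 q.2.1 q.2.2)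
        (fun i q => fderiv ℝ (fun q : Ph d => h q.1 q.2.1 q.2.2) q (0, Pi.single i 1, 0))
        (fun i q => fderiv ℝ (fun q : Ph d => h q.1 q.2.1 q.2.2) q (0, 0, Pi.single i 1))
        i (s, z.1, z.2) ∂(nu d) + 2 * lam * HpPi d p (h s) := fun s hs => by
    rw [HpPi_eq hF p hs]; unfold lyap; ring
  rw [hsplit t ht, hsplit 0 le_rfl] at hdec
  have hlow := (hF.modF_bounds hlam p t).1
  have hupp := (hF.modF_bounds hlam p 0).2
  rw [← Ipfull_eq hF] at hlow hupp
  rw [← hκ] at hlow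
  rw [← hKd] at hupp
  have hexp := exp_pos (-Lam * t)
  have hpi : 0 ≤ HpPi d p (h t) := by
    rw [HpPi_eq hF p ht]
    exact div_nonneg (sub_nonneg.2 (hF.one_le_avg_pow hp1.le ht)) (by positivity)
  have hbk : ∀ s, 0 ≤ s → Hp d p (h s) ≤ CB * Ipfull d p (h s) := fun s hs => by
    rw [Hp_eq hF p hs, Ipfull_eq hF]; exact hF.beckner hp1 hp2 hs
  have hpiH : HpPi d p (h 0) ≤ Hp d p (h 0) := by
    rw [HpPi_eq hF p le_rfl, Hp_eq hF p le_rfl]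
    exact div_le_div_of_nonneg_right
      (sub_le_sub_right (hF.avg_pow_le hp1.le 0) 1) (by positivity)
  have hmain : κ * Ipfull d p (h t) + 2 * lam * HpPi d p (h t)
      ≤ exp (-Lam * t) * (K * Ipfull d p (h 0) + 2 * lam * HpPi d p (h 0)) := by
    have := mul_le_mul_of_nonneg_left
      (add_le_add_left hupp (2 * lam * HpPi d p (h 0))) hexp.le
    linarith
  have hfirst : Ipfull d p (h t) + 2 * lam / κ * HpPi d p (h t)
      ≤ exp (-Lam * t) * (K / κ * Ipfull d p (h 0) + 2 * lam / κ * HpPi d p (h 0)) := by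
    have := div_le_div_of_nonneg_right hmain hκ0.le
    calc _ = (κ * Ipfull d p (h t) + 2 * lam * HpPi d p (h t)) / κ := by field_simp
      _ ≤ _ := this
      _ = _ := by ring
  refine ⟨hfirst, ?_⟩
  have h1 := mul_nonneg hβ.le hpi
  have h2 := hbk t ht
  have h3 := mul_le_mul_of_nonneg_left (hpiH.trans (hbk 0 le_rfl)) hβ.le
  have h4 : Ipfull d p (h t)
      ≤ exp (-Lam * t) * ((K / κ + 2 * lam / κ * CB) * Ipfull d p (h 0)) := by
    have := mul_le_mul_of_nonneg_left (add_le_add_right h3 (K / κ * Ipfull d p (h 0))) hexp.le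
    linarith
  calc Hp d p (h t) ≤ CB * Ipfull d p (h t) := h2
    _ ≤ CB * (exp (-Lam * t) * ((K / κ + 2 * lam / κ * CB) * Ipfull d p (h 0))) :=
      mul_le_mul_of_nonneg_left h4 hbeck.le
    _ = _ := by ring

end
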